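/- arXiv:0808.1095 — 4 statements merged into one kernel-verified Lean document; each statement's English description precedes it below -/
import Mathlib

section
/- Let R₀ be a finitely generated integral domain possessing infinitely many pairwise non-associate prime elements, let R = R₀[s,t] be the polynomial ring in two variables over R₀, and let F be the field of fractions of R. Then every group Γ with SL₂(R) ≤ Γ ≤ SL₂(F) (where SL₂(R) is identified with the subgroup of SL₂(F) of matrices with entries in R) is not finitely generated. -/
/-!
Suppose `Γ` is finitely generated. Clearing the denominators of the generators, `Γ ≤ SL₂(R[1/f])`
for some `f ≠ 0` (`InfGen.exists_lift`). Let `l` be the leading coefficient of `f` with respect to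
`t` and `B = R₀[s][1/l]`. Expanding at `t = ∞` gives a map `R[1/f] → B((X))`, `t ↦ X⁻¹`, because
the image of `f` has the unit `l` as its leading coefficient. So `Γ` acts on the Bruhat–Tits tree
of the valuation of `B((X))`.

The orbit of the standard vertex `x₀` under a finitely generated group is joined by finitely many
orbits of geodesic segments, so the geodesics `[x₀, g x₀]` use only finitely many orbits of edges.
The edges at `x₀` are the lines over the residue field, and an element mapping one edge at `x₀` to
another is an integral matrix, whose reduction lies in `SL₂(B)`. Hence only finitely many
`SL₂(B)`-classes of lines occur as initial directions of geodesics `[x₀, g x₀]`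
(`InfGen.exists_equiv_of_fg`). The proof is carried out on leading coefficient matrices, without
the tree: if `h` lies outside and `h * s` inside the branch given by a line, the norms of `h` and
`h * s` add up to that of `s` (`InfGen.crossing`), and given `s` and these norms, `h` is determined
up to integral matrices (`InfGen.exists_transport`).

On the other hand, `SL₂(R)` contains `1 + t * v * v^⊥` for each `v = (p, q)` over `R₀[s]`, and its
initial direction is the line of `v`. Take `q = 1 + s * l` and let `p` run through the infinitely
many non-associate primes of `R₀` not dividing `l`. If two such lines are equivalent under `SL₂(B)`,
then `p' ∈ (p, q)` in `B`; since `l` is invertible modulo `q` this holds in `R₀[s]`, and comparing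
degrees modulo `p` gives `p ∣ p'` (`InfGen.dvd_of_equiv`), a contradiction.
-/

open Matrix Pointwise

noncomputable section

/-- `SL₂` over a commutative ring. -/
abbrev SL2 (A : Type*) [CommRing A] := Matrix.SpecialLinearGroup (Fin 2) A

/-- The elementary matrix `E₁₂(r) = [[1, r], [0, 1]]`. -/
def E12 {A : Type*} [CommRing A] (r : A) : SL2 A :=
  ⟨!![1, r; 0, 1], by simp [Matrix.det_fin_two_of]⟩

/-- The elementary matrix `E₂₁(r) = [[1, 0], [r, 1]]`. -/
def E21 {A : Type*} [CommRing A] (r : A) : SL2 A :=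
  ⟨!![1, 0; r, 1], by simp [Matrix.det_fin_two_of]⟩

/-- `SL₂(S)` identified with the subgroup of `SL₂(F)` of matrices with entries in the
subring `S` of the field `F` (the image of `SL₂(S) → SL₂(F)`). -/
def SL2In {F : Type*} [Field F] (S : Subring F) : Subgroup (SL2 F) :=
  (Matrix.SpecialLinearGroup.map S.subtype).range

/-- `E₂(S)`: the subgroup of `SL₂(F)` generated by the elementary matrices with
entry in the subring `S`. -/
def E2 {F : Type*} [Field F] (S : Subring F) : Subgroup (SL2 F) :=
  Subgroup.closure {g | ∃ r ∈ S, g = E12 r ∨ g = E21 r}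

/-- The set `D(1/π,1)·Γ·D(π,1)` of conjugates inside `SL₂(F)`. -/
def conjSet {F : Type*} [Field F] (π : F) (Γ : Subgroup (SL2 F)) : Set (SL2 F) :=
  {g | ∃ h ∈ Γ, (g : Matrix (Fin 2) (Fin 2) F) =
    !![π⁻¹, 0; 0, 1] * (h : Matrix (Fin 2) (Fin 2) F) * !![π, 0; 0, 1]}

namespace InfGen

/-! ### Orders of Laurent series -/

section Series

open HahnSeries

variable {B : Type*} [CommRing B]

/-- The series `x` in `B((X))` has order at least `n`; in contrast to `HahnSeries.order`, the zero
series satisfies this for every `n`. -/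
def OrdGE (n : ℤ) (x : HahnSeries ℤ B) : Prop := ∀ k < n, x.coeff k = 0

lemma OrdGE.mul {m n : ℤ} {x y : HahnSeries ℤ B} (hx : OrdGE m x) (hy : OrdGE n y) :
    OrdGE (m + n) (x * y) := by
  intro k hk
  rw [coeff_mul]
  refine Finset.sum_eq_zero fun ij hij => ?_
  obtain ⟨-, -, hij⟩ := Finset.mem_antidiagonal.1 hij
  by_cases h : ij.1 < m
  · rw [hx _ h, zero_mul]
  · rw [hy _ (by omega), mul_zero]

lemma OrdGE.coeff_mul {m n : ℤ} {x y : HahnSeries ℤ B} (hx : OrdGE m x) (hy : OrdGE n y) :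
    (x * y).coeff (m + n) = x.coeff m * y.coeff n := by
  rw [HahnSeries.coeff_mul, Finset.sum_eq_single (m, n)]
  · intro ij hij hne
    obtain ⟨-, -, hij⟩ := Finset.mem_antidiagonal.1 hij
    by_cases h : ij.1 < m
    · rw [hx _ h, zero_mul]
    · by_cases h' : ij.2 < n
      · rw [hy _ h', mul_zero]
      · exact absurd (Prod.ext (by dsimp only; omega) (by dsimp only; omega)) hne
  · intro h
    rw [Finset.mem_antidiagonal] at h
    simp only [mem_support, ne_eq, and_true, not_and, not_not] at h
    by_cases h0 : x.coeff m = 0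
    · simp [h0]
    · simp [h h0]

lemma OrdGE.add {n : ℤ} {x y : HahnSeries ℤ B} (hx : OrdGE n x) (hy : OrdGE n y) :
    OrdGE n (x + y) := fun k hk => by simp [hx k hk, hy k hk]

lemma OrdGE.sub {n : ℤ} {x y : HahnSeries ℤ B} (hx : OrdGE n x) (hy : OrdGE n y) :
    OrdGE n (x - y) := fun k hk => by simp [hx k hk, hy k hk]

lemma OrdGE.neg {n : ℤ} {x : HahnSeries ℤ B} (hx : OrdGE n x) :
    OrdGE n (-x) := fun k hk => by simp [hx k hk]

lemma ordGE_order (x : HahnSeries ℤ B) : OrdGE x.order x :=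
  fun _ hk => coeff_eq_zero_of_lt_order hk

lemma OrdGE.of_mul [IsDomain B] {p : ℤ} {d u : HahnSeries ℤ B} (hd : OrdGE p d)
    (hd0 : d.coeff p ≠ 0) (h : OrdGE p (u * d)) : OrdGE 0 u := by
  by_cases hu : u = 0
  · intro k _; simp [hu]
  have h1 := (ordGE_order u).coeff_mul hd
  intro k hk
  by_cases hneg : u.order < 0
  · rw [h _ (by omega)] at h1
    exact absurd h1.symm (mul_ne_zero (by simpa [coeff_order_eq_zero] using hu) hd0)
  · exact ordGE_order u k (by omega)

end Series

/-! ### Directions in the tree of `SL₂(B((X)))` -/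

section Matrices

open HahnSeries

variable {B : Type*} [CommRing B]

/-- `IsNorm g m A`: the entries of `g` have order at least `-m`, and `A ≠ 0` is the matrix of their
coefficients in degree `-m`. So `X ^ (-m)` is the largest power of `1/X` occurring in `g`, and
`2 * m` is the distance by which `g` moves the standard vertex of the tree of `SL₂(B((X)))`. -/
def IsNorm (g : SL2 (HahnSeries ℤ B)) (m : ℤ) (A : Matrix (Fin 2) (Fin 2) B) : Prop :=
  (∀ i j, OrdGE (-m) (g i j)) ∧ (∀ i j, A i j = (g i j).coeff (-m)) ∧ ∃ i j, A i j ≠ 0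

lemma mul_entry (g h : SL2 (HahnSeries ℤ B)) (i k : Fin 2) :
    (g * h) i k = g i 0 * h 0 k + g i 1 * h 1 k := by
  have : (g * h) i k = (g.1 * h.1) i k := rfl
  rw [this, Matrix.mul_apply, Fin.sum_univ_two]

lemma inv_mul_entry_zero (g h : SL2 (HahnSeries ℤ B)) (k : Fin 2) :
    (g⁻¹ * h) 0 k = g 1 1 * h 0 k - g 0 1 * h 1 k := by
  have e (j : Fin 2) : g⁻¹ 0 j = !![g 1 1, -g 0 1; -g 1 0, g 0 0] 0 j := by
    rw [SpecialLinearGroup.SL2_inv_expl]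
    rfl
  rw [mul_entry, e, e]
  simp
  ring

lemma inv_mul_entry_one (g h : SL2 (HahnSeries ℤ B)) (k : Fin 2) :
    (g⁻¹ * h) 1 k = g 0 0 * h 1 k - g 1 0 * h 0 k := by
  have e (j : Fin 2) : g⁻¹ 1 j = !![g 1 1, -g 0 1; -g 1 0, g 0 0] 1 j := by
    rw [SpecialLinearGroup.SL2_inv_expl]
    rfl
  rw [mul_entry, e, e]
  simp
  ring

lemma exists_isNorm [Nontrivial B] (g : SL2 (HahnSeries ℤ B)) : ∃ m A, IsNorm g m A := by
  have hne : ∃ ij : Fin 2 × Fin 2, g ij.1 ij.2 ≠ 0 := by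
    by_contra! h
    have hdet := g.det_coe
    rw [det_fin_two] at hdet
    simp [h (0, 0), h (0, 1)] at hdet
  classical
  obtain ⟨ij, hij, hmin⟩ := Finset.exists_min_image
    (Finset.univ.filter fun ij : Fin 2 × Fin 2 => g ij.1 ij.2 ≠ 0) (fun ij => (g ij.1 ij.2).order)
    (by simpa [Finset.Nonempty] using hne)
  simp only [Finset.mem_filter, Finset.mem_univ, true_and] at hij hmin
  refine ⟨-(g ij.1 ij.2).order, fun i j => (g i j).coeff (g ij.1 ij.2).order, ?_, by simp,
    ij.1, ij.2, by simpa [coeff_order_eq_zero] using hij⟩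
  intro i j k hk
  by_cases h0 : g i j = 0
  · simp [h0]
  · have := hmin (i, j) h0
    exact ordGE_order _ k (by dsimp only at this; omega)

lemma IsNorm.unique {g : SL2 (HahnSeries ℤ B)} {m n : ℤ} {A A' : Matrix (Fin 2) (Fin 2) B}
    (h : IsNorm g m A) (h' : IsNorm g n A') : m = n := by
  obtain ⟨h1, h2, i, j, h3⟩ := h
  obtain ⟨h1', h2', i', j', h3'⟩ := h'
  rw [h2] at h3
  rw [h2'] at h3'
  have a : ¬ (-m < -n) := fun hlt => h3 (h1' i j _ hlt)
  have b : ¬ (-n < -m) := fun hlt => h3' (h1 i' j' _ hlt)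
  omega

lemma IsNorm.det_coeff {g : SL2 (HahnSeries ℤ B)} {m : ℤ} {A : Matrix (Fin 2) (Fin 2) B}
    (h : IsNorm g m A) :
    A 0 0 * A 1 1 - A 0 1 * A 1 0 = (1 : HahnSeries ℤ B).coeff (-m + -m) := by
  have hdet := g.det_coe
  rw [det_fin_two] at hdet
  rw [← hdet, coeff_sub, (h.1 0 0).coeff_mul (h.1 1 1), (h.1 0 1).coeff_mul (h.1 1 0)]
  simp [h.2.1]

lemma IsNorm.nonneg [Nontrivial B] {g : SL2 (HahnSeries ℤ B)} {m : ℤ}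
    {A : Matrix (Fin 2) (Fin 2) B} (h : IsNorm g m A) : 0 ≤ m := by
  by_contra! hm
  have hdet := g.det_coe
  rw [det_fin_two] at hdet
  have := ((h.1 0 0).mul (h.1 1 1)).sub ((h.1 0 1).mul (h.1 1 0)) 0 (by omega)
  rw [hdet] at this
  simp at this

/-- `InBranch v g`: the element `g` moves the standard vertex of the tree of `SL₂(B((X)))`, and the
geodesic to its image leaves the standard vertex in the direction of the line spanned by `v`, that
is, the columns of the leading matrix of `g` are proportional to `v`. -/
def InBranch (v : Fin 2 → B) (g : SL2 (HahnSeries ℤ B)) : Prop :=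
  ∃ m A, IsNorm g m A ∧ 0 < m ∧ ∀ j, v 0 * A 1 j = v 1 * A 0 j

lemma not_inBranch_one [Nontrivial B] (v : Fin 2 → B) : ¬ InBranch v 1 := by
  rintro ⟨m, A, h, hm, -⟩
  obtain ⟨h1, h2, i, j, h3⟩ := h
  refine h3 ?_
  rw [h2]
  by_cases hij : i = j
  · subst hij; simp [coeff_one]; omega
  · simp [Matrix.one_apply_ne hij]

/-- If `h` lies outside the branch `v` and `h * s` inside it, the standard vertex lies on the
geodesic between their images of it. Hence the norms add up, and some column of the leading matrix
of `h` is independent of some column of the leading matrix of `h * s`. -/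
lemma crossing [IsDomain B] {v : Fin 2 → B} (hv : v 0 ≠ 0) {h s : SL2 (HahnSeries ℤ B)}
    (h0 : ¬ InBranch v h) (h1 : InBranch v (h * s)) :
    ∃ (m n : ℤ) (A A' : Matrix (Fin 2) (Fin 2) B), IsNorm h m A ∧ IsNorm (h * s) n A' ∧
      0 ≤ m ∧ 0 ≤ n ∧ (∃ C, IsNorm s (m + n) C) ∧ (∀ j, v 0 * A' 1 j = v 1 * A' 0 j) ∧
      ∃ j j', A' 0 j' ≠ 0 ∧ A 0 j * A' 1 j' - A 1 j * A' 0 j' ≠ 0 := by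
  obtain ⟨m, A, hA⟩ := exists_isNorm h
  obtain ⟨n, A', hA', hn, hp⟩ := h1
  have hm := hA.nonneg
  -- some column of `A` is not proportional to `v`
  have hcol : ∃ j, v 0 * A 1 j ≠ v 1 * A 0 j := by
    by_contra! hall
    rcases hm.lt_or_eq with hm | rfl
    · exact h0 ⟨m, A, hA, hm, hall⟩
    · have hd := hA.det_coeff
      simp only [neg_zero, add_zero, coeff_one, if_true] at hd
      apply hv
      linear_combination (-v 0) * hd + A 0 0 * hall 1 - A 0 1 * hall 0
  obtain ⟨j, hj⟩ := hcol
  have hcol' : ∃ j', A' 0 j' ≠ 0 := by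
    obtain ⟨i, j', hij⟩ := hA'.2.2
    refine ⟨j', fun h0 => hij ?_⟩
    have h1 := hp j'
    rw [h0, mul_zero] at h1
    have h1 := (mul_eq_zero.1 h1).resolve_left hv
    fin_cases i
    · exact h0
    · exact h1
  obtain ⟨j', hj'⟩ := hcol'
  have hne : A 0 j * A' 1 j' - A 1 j * A' 0 j' ≠ 0 := by
    intro he
    apply hj
    have : A' 0 j' * (v 0 * A 1 j - v 1 * A 0 j) = 0 := by
      linear_combination (-v 0) * he + A 0 j * hp j'
    exact sub_eq_zero.1 ((mul_eq_zero.1 this).resolve_left hj')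
  refine ⟨m, n, A, A', hA, hA', hm, hn.le, ?_, hp, j, j', hj', hne⟩
  have e0 : ∀ k, s 0 k = h 1 1 * (h * s) 0 k - h 0 1 * (h * s) 1 k := fun k => by
    rw [← inv_mul_entry_zero, inv_mul_cancel_left]
  have e1 : ∀ k, s 1 k = h 0 0 * (h * s) 1 k - h 1 0 * (h * s) 0 k := fun k => by
    rw [← inv_mul_entry_one, inv_mul_cancel_left]
  have hmn : -(m + n) = -m + -n := by ring
  have c0 : ∀ k, (s 0 k).coeff (-(m + n)) = A 1 1 * A' 0 k - A 0 1 * A' 1 k := fun k => by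
    rw [e0, hmn, coeff_sub, (hA.1 _ _).coeff_mul (hA'.1 _ _), (hA.1 _ _).coeff_mul (hA'.1 _ _)]
    simp [hA.2.1, hA'.2.1]
  have c1 : ∀ k, (s 1 k).coeff (-(m + n)) = A 0 0 * A' 1 k - A 1 0 * A' 0 k := fun k => by
    rw [e1, hmn, coeff_sub, (hA.1 _ _).coeff_mul (hA'.1 _ _), (hA.1 _ _).coeff_mul (hA'.1 _ _)]
    simp [hA.2.1, hA'.2.1]
  refine ⟨fun i k => (s i k).coeff (-(m + n)), ?_, fun _ _ => rfl, ?_⟩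
  · intro i k
    rw [hmn]
    fin_cases i
    · change OrdGE _ (s 0 k)
      rw [e0]
      exact ((hA.1 _ _).mul (hA'.1 _ _)).sub ((hA.1 _ _).mul (hA'.1 _ _))
    · change OrdGE _ (s 1 k)
      rw [e1]
      exact ((hA.1 _ _).mul (hA'.1 _ _)).sub ((hA.1 _ _).mul (hA'.1 _ _))
  · fin_cases j
    · exact ⟨1, j', fun h => hne ((c1 j').symm.trans h)⟩
    · refine ⟨0, j', ?_⟩
      intro h
      replace h := (c0 j').symm.trans h
      apply hne
      change A 0 1 * A' 1 j' - A 1 1 * A' 0 j' = 0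
      linear_combination -h

/-- Two elements `h`, `h'` whose inverses move the standard vertex to the same point of its
geodesic to its image under `s` differ by an integral matrix: that point is the class of a lattice
determined by `s` and the norms `m`, `n`. Reducing this integral matrix modulo `X` maps the
direction of `h' * s` to that of `h * s`. -/
lemma exists_transport [IsDomain B] {v v' : Fin 2 → B} {h h' s : SL2 (HahnSeries ℤ B)}
    {m n : ℤ} {A A' D D' : Matrix (Fin 2) (Fin 2) B}
    (hD : IsNorm h m D) (hD' : IsNorm (h * s) n D') (hA : IsNorm h' m A)
    (hA' : IsNorm (h' * s) n A') (hp : ∀ j, v 0 * D' 1 j = v 1 * D' 0 j)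
    (hp' : ∀ j, v' 0 * A' 1 j = v' 1 * A' 0 j)
    (hj : ∃ j j', A' 0 j' ≠ 0 ∧ A 0 j * A' 1 j' - A 1 j * A' 0 j' ≠ 0) :
    ∃ U : Matrix (Fin 2) (Fin 2) B, U.det = 1 ∧
      v 0 * (U 1 0 * v' 0 + U 1 1 * v' 1) = v 1 * (U 0 0 * v' 0 + U 0 1 * v' 1) := by
  obtain ⟨j, j', hj', hne⟩ := hj
  set u := h * h'⁻¹ with hu
  have e : ∀ i k, h i k = u i 0 * h' 0 k + u i 1 * h' 1 k := fun i k => by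
    rw [← mul_entry, hu, inv_mul_cancel_right]
  have e' : ∀ i k, (h * s) i k = u i 0 * (h' * s) 0 k + u i 1 * (h' * s) 1 k := fun i k => by
    rw [← mul_entry, ← mul_assoc, hu, inv_mul_cancel_right]
  -- `δ` has order exactly `-m + -n`, so Cramer's rule bounds the order of the entries of `u`
  set δ := h' 0 j * (h' * s) 1 j' - h' 1 j * (h' * s) 0 j' with hδ
  have hδ1 : OrdGE (-m + -n) δ :=
    ((hA.1 _ _).mul (hA'.1 _ _)).sub ((hA.1 _ _).mul (hA'.1 _ _))
  have hδ0 : δ.coeff (-m + -n) ≠ 0 := by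
    rw [hδ, coeff_sub, (hA.1 _ _).coeff_mul (hA'.1 _ _), (hA.1 _ _).coeff_mul (hA'.1 _ _)]
    simpa only [← hA.2.1, ← hA'.2.1] using hne
  have hinteg : ∀ i k, OrdGE 0 (u i k) := by
    intro i k
    refine OrdGE.of_mul hδ1 hδ0 ?_
    fin_cases k
    · have : u i 0 * δ = h i j * (h' * s) 1 j' - h' 1 j * (h * s) i j' := by
        rw [e, e', hδ]; ring
      change OrdGE _ (u i 0 * δ)
      rw [this]
      exact ((hD.1 _ _).mul (hA'.1 _ _)).sub ((hA.1 _ _).mul (hD'.1 _ _))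
    · have : u i 1 * δ = h' 0 j * (h * s) i j' - h i j * (h' * s) 0 j' := by
        rw [e, e', hδ]; ring
      change OrdGE _ (u i 1 * δ)
      rw [this]
      exact ((hA.1 _ _).mul (hD'.1 _ _)).sub ((hD.1 _ _).mul (hA'.1 _ _))
  have hred : ∀ i, D' i j' = (u i 0).coeff 0 * A' 0 j' + (u i 1).coeff 0 * A' 1 j' := by
    intro i
    have h0 := (hinteg i 0).coeff_mul (hA'.1 0 j')
    have h1 := (hinteg i 1).coeff_mul (hA'.1 1 j')
    rw [zero_add] at h0 h1
    rw [hD'.2.1, e', coeff_add, h0, h1, hA'.2.1, hA'.2.1]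
  refine ⟨Matrix.of fun i k => (u i k).coeff 0, ?_, ?_⟩
  · have hdet := u.det_coe
    rw [det_fin_two] at hdet
    have h0 := (hinteg 0 0).coeff_mul (hinteg 1 1)
    have h1 := (hinteg 0 1).coeff_mul (hinteg 1 0)
    rw [zero_add] at h0 h1
    rw [det_fin_two]
    simp only [of_apply]
    rw [← h0, ← h1, ← coeff_sub, hdet]
    simp
  · simp only [of_apply]
    have h0 := hp j'
    rw [hred, hred] at h0
    refine mul_left_cancel₀ hj' ?_
    linear_combination v' 0 * h0 +
      (v 1 * (u 0 1).coeff 0 - v 0 * (u 1 1).coeff 0) * hp' j'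

/-- Bass–Serre style criterion: a finitely generated group meets, up to the reductions of integral
matrices, only finitely many branches at the standard vertex. -/
theorem exists_equiv_of_fg [IsDomain B] {J : Type*} [Infinite J] (v : J → Fin 2 → B)
    (hv : ∀ j, v j 0 ≠ 0) (G : Subgroup (SL2 (HahnSeries ℤ B))) (hG : G.FG)
    (hbr : ∀ j, ∃ g ∈ G, InBranch (v j) g) :
    ∃ j k, j ≠ k ∧ ∃ U : Matrix (Fin 2) (Fin 2) B, U.det = 1 ∧
      v j 0 * (U 1 0 * v k 0 + U 1 1 * v k 1) = v j 1 * (U 0 0 * v k 0 + U 0 1 * v k 1) := by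
  obtain ⟨T, hT⟩ := hG
  -- along a word in the generators, some letter enters the branch
  have hcross : ∀ j, ∃ s ∈ (T : Set (SL2 (HahnSeries ℤ B))) ∪ (T : Set _)⁻¹, ∃ h,
      ¬ InBranch (v j) h ∧ InBranch (v j) (h * s) := by
    intro j
    by_contra! hno
    obtain ⟨g, hg, hb⟩ := hbr j
    rw [← hT] at hg
    revert hb
    induction hg using Subgroup.closure_induction_right with
    | one => exact not_inBranch_one _
    | mul_right x hx y hy ih => exact hno y (Or.inl hy) x ih
    | mul_inv_cancel x hx y hy ih =>
      exact hno y⁻¹ (Or.inr (Set.inv_mem_inv.2 hy)) x ih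
  choose s hs h hh0 hh1 using hcross
  choose m n A A' hA hA' hm hn hC hp hj using fun j => crossing (hv j) (hh0 j) (hh1 j)
  -- only finitely many triples `(s, m, n)` occur, as `m + n` is determined by `s`
  have hfin : (⋃ t ∈ (T : Set (SL2 (HahnSeries ℤ B))) ∪ (T : Set _)⁻¹,
      {x : SL2 (HahnSeries ℤ B) × ℤ × ℤ | x.1 = t ∧ 0 ≤ x.2.1 ∧ 0 ≤ x.2.2 ∧
        ∃ C, IsNorm t (x.2.1 + x.2.2) C}).Finite := by
    refine Set.Finite.biUnion (T.finite_toSet.union T.finite_toSet.inv) fun t _ => ?_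
    obtain ⟨N, C, hN⟩ := exists_isNorm t
    refine (((Set.finite_singleton t).prod
      ((Set.finite_Icc 0 N).prod (Set.finite_Icc 0 N)))).subset ?_
    rintro ⟨x, a, b⟩ ⟨rfl, ha, hb, C', hC'⟩
    have := hC'.unique hN
    simp only [Set.mem_prod, Set.mem_singleton_iff, Set.mem_Icc, true_and] at *
    omega
  obtain ⟨j, -, k, -, hjk, heq⟩ := Set.infinite_univ.exists_ne_map_eq_of_mapsTo
    (f := fun j : J => (s j, m j, n j))
    (fun j _ => Set.mem_biUnion (hs j) (by exact ⟨rfl, hm j, hn j, hC j⟩)) hfin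
  simp only [Prod.mk.injEq] at heq
  obtain ⟨h1, h2, h3⟩ := heq
  refine ⟨j, k, hjk, ?_⟩
  have a1 := hA j
  have a2 := hA' j
  rw [h2] at a1
  rw [h1, h3] at a2
  exact exists_transport a1 a2 (hA k) (hA' k) (hp j) (hp k) (hj k)

end Matrices

/-! ### Inequivalent lines over `R₀[X][1/l]` -/

section Arithmetic

open Polynomial

/-- If a matrix of determinant one over `R₀[X][1/l]` maps the line spanned by `(p', 1 + X * l)` to
the line spanned by `(p, 1 + X * l)`, then `p` divides `p'`. The point of `q = 1 + X * l` is that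
`l` is invertible modulo `q`, so that `(p, q)` is not affected by inverting `l`. -/
lemma dvd_of_equiv {R₀ : Type*} [CommRing R₀] [IsDomain R₀] {l : R₀[X]} {p p' : R₀}
    (hp : Prime p) (hpl : ¬ C p ∣ l) {B : Type*} [CommRing B] [Algebra R₀[X] B]
    [IsLocalization.Away l B]
    (U : Matrix (Fin 2) (Fin 2) B) (hU : U.det = 1)
    (h : algebraMap R₀[X] B (C p) * (U 1 0 * algebraMap R₀[X] B (C p') +
        U 1 1 * algebraMap R₀[X] B (1 + X * l)) =
      algebraMap R₀[X] B (1 + X * l) * (U 0 0 * algebraMap R₀[X] B (C p') +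
        U 0 1 * algebraMap R₀[X] B (1 + X * l))) :
    p ∣ p' := by
  have hl : l ≠ 0 := fun h => hpl (h ▸ dvd_zero _)
  have hinj : Function.Injective (algebraMap R₀[X] B) :=
    IsLocalization.injective B (powers_le_nonZeroDivisors_of_noZeroDivisors hl)
  have hPp : Prime (C p : R₀[X]) := Polynomial.prime_C_iff.2 hp
  obtain ⟨⟨b, hb⟩, hden⟩ := IsLocalization.exist_integer_multiples_of_finite
    (Submonoid.powers l) (fun ij : Fin 2 × Fin 2 => U ij.1 ij.2)
  obtain ⟨n, rfl⟩ := hb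
  choose V hV using hden
  simp only [Algebra.smul_def] at hV
  have hV' : ∀ i j, algebraMap R₀[X] B (V (i, j)) = algebraMap R₀[X] B (l ^ n) * U i j :=
    fun i j => hV (i, j)
  set q : R₀[X] := 1 + X * l with hq
  set a := V (0, 0) * C p' + V (0, 1) * q with ha
  set b := V (1, 0) * C p' + V (1, 1) * q with hb
  have hab : C p * b = q * a := by
    apply hinj
    simp only [ha, hb, map_mul, map_add, hV']
    linear_combination algebraMap R₀[X] B (l ^ n) * h
  have hdet : V (0, 0) * V (1, 1) - V (0, 1) * V (1, 0) = (l ^ n) ^ 2 := by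
    apply hinj
    rw [det_fin_two] at hU
    simp only [map_mul, map_sub, hV', map_pow (algebraMap R₀[X] B) (l ^ n) 2]
    linear_combination (algebraMap R₀[X] B (l ^ n)) ^ 2 * hU
  -- the constant coefficient of `q` is `1`
  have hpq : ¬ C p ∣ q := by
    intro hd
    have := (Polynomial.C_dvd_iff_dvd_coeff _ _).1 hd 0
    simp only [hq, coeff_add, coeff_one_zero, mul_coeff_zero, coeff_X_zero, zero_mul,
      add_zero] at this
    exact hp.not_isUnit (isUnit_of_dvd_one this)
  obtain ⟨c, hc⟩ : C p ∣ a := (hPp.dvd_or_dvd ⟨b, hab.symm⟩).resolve_left hpq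
  have hbc : b = q * c := mul_left_cancel₀ hPp.ne_zero (by rw [hab, hc]; ring)
  have hmem : (l ^ n) ^ 2 * C p' = C p * (V (1, 1) * c) - q * (V (0, 1) * c) := by
    rw [← hdet]
    linear_combination V (1, 1) * (hc - ha) - V (0, 1) * (hbc - hb)
  -- reduce modulo `p`
  have hprime : (Ideal.span {p}).IsPrime := (Ideal.span_singleton_prime hp.ne_zero).2 hp
  let π : R₀ →+* R₀ ⧸ Ideal.span {p} := Ideal.Quotient.mk _
  have hπp : π p = 0 := Ideal.Quotient.eq_zero_iff_mem.2 (Ideal.mem_span_singleton_self p)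
  have hπl : l.map π ≠ 0 := by
    intro h0
    apply hpl
    rw [Polynomial.C_dvd_iff_dvd_coeff]
    intro i
    rw [← Ideal.mem_span_singleton, ← Ideal.Quotient.eq_zero_iff_mem]
    have := congrArg (fun f => Polynomial.coeff f i) h0
    simpa using this
  have hdvd : q.map π ∣ (l.map π ^ n) ^ 2 * C (π p') := by
    have := congrArg (Polynomial.map π) hmem
    simp only [Polynomial.map_mul, Polynomial.map_pow, Polynomial.map_sub, map_C, hπp, map_zero,
      zero_mul, zero_sub] at this
    rw [this]
    exact (dvd_mul_right _ _).neg_right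
  have hqm : q.map π = 1 + X * l.map π := by simp [hq]
  have hcop : IsCoprime (q.map π) ((l.map π ^ n) ^ 2) := by
    refine IsCoprime.pow_right (IsCoprime.pow_right ⟨1, -X, ?_⟩)
    rw [hqm]; ring
  have hdvd' : q.map π ∣ C (π p') := hcop.dvd_of_dvd_mul_left hdvd
  have hdeg : 0 < (q.map π).degree := by
    have : 0 < (X * l.map π).degree := by
      rw [degree_mul, degree_X, degree_eq_natDegree hπl]
      exact_mod_cast (by omega : 0 < 1 + (l.map π).natDegree)
    rw [hqm, degree_add_eq_right_of_degree_lt (lt_of_le_of_lt degree_one_le this)]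
    exact this
  have hz : C (π p') = 0 := by
    by_contra hne
    have := Polynomial.degree_le_of_dvd hdvd' hne
    exact absurd (hdeg.trans_le this) (not_lt.2 degree_C_le)
  rw [← Ideal.mem_span_singleton, ← Ideal.Quotient.eq_zero_iff_mem]
  exact C_eq_zero.1 hz

/-- A nonzero polynomial has, up to association, only finitely many constant prime divisors. -/
lemma infinite_not_dvd {R₀ : Type*} [CommRing R₀] [IsDomain R₀] [IsNoetherianRing R₀]
    {P : Set R₀} (hinf : P.Infinite) (hP : ∀ p ∈ P, Prime p)
    (hPP : P.Pairwise fun p q => ¬ Associated p q) {l : R₀[X]} (hl : l ≠ 0) :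
    {p ∈ P | ¬ C p ∣ l}.Infinite := by
  obtain ⟨fs, hfs, hassoc⟩ := WfDvdMonoid.exists_factors l.leadingCoeff (by simpa using hl)
  have hfin : {p ∈ P | C p ∣ l}.Finite := by
    have key : ∀ p ∈ {p ∈ P | C p ∣ l}, ∃ f ∈ fs, Associated p f := by
      rintro p ⟨hp, hd⟩
      have h1 : p ∣ l.leadingCoeff := (Polynomial.C_dvd_iff_dvd_coeff _ _).1 hd _
      obtain ⟨f, hf, hpf⟩ := (hP p hp).exists_mem_multiset_dvd (h1.trans hassoc.symm.dvd)
      exact ⟨f, hf, (hP p hp).irreducible.associated_of_dvd (hfs f hf) hpf⟩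
    classical
    choose! F hF hF' using key
    refine Set.Finite.of_finite_image (f := F)
      ((fs.toFinset.finite_toSet).subset ?_) ?_
    · rintro _ ⟨p, hp, rfl⟩
      simpa using hF p hp
    · intro p hp q hq hpq
      by_contra hne
      exact hPP hp.1 hq.1 hne ((hF' p hp).trans (hpq ▸ (hF' q hq).symm))
  refine (hinf.sdiff hfin).mono ?_
  rintro p ⟨hp, hn⟩
  exact ⟨hp, fun h => hn ⟨hp, h⟩⟩

end Arithmetic

/-! ### Expansion at infinity and reduction to `R[1/f]` -/

section Assembly

open Polynomial

variable {P B : Type*} [CommRing P] [CommRing B]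

/-- The expansion at infinity `P[t] → B((X))`, `t ↦ X⁻¹`, along a ring map `P → B`. -/
def expand (α : P →+* B) : P[X] →+* HahnSeries ℤ B :=
  eval₂RingHom (HahnSeries.C.comp α) (HahnSeries.single (-1) 1)

lemma expand_C (α : P →+* B) (a : P) : expand α (C a) = HahnSeries.C (α a) := by
  simp [expand]

lemma expand_X (α : P →+* B) : expand α X = HahnSeries.single (-1) 1 := by
  simp [expand]

lemma coeff_expand (α : P →+* B) (f : P[X]) (k : ℤ) :
    (expand α f).coeff k = if k ≤ 0 then α (f.coeff (-k).toNat) else 0 := by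
  induction f using Polynomial.induction_on' with
  | add f g hf hg => rw [map_add, HahnSeries.coeff_add, hf, hg]; split_ifs <;> simp
  | monomial n a =>
    rw [← C_mul_X_pow_eq_monomial, map_mul, map_pow, expand_C, expand_X, HahnSeries.single_pow,
      HahnSeries.C_apply, HahnSeries.single_mul_single, HahnSeries.coeff_single, coeff_C_mul_X_pow]
    simp only [one_pow, mul_one, zero_add, smul_neg, nsmul_eq_mul]
    split_ifs <;> first | rfl | omega | simp

lemma isUnit_expand [IsDomain B] (α : P →+* B) {f : P[X]} (hf : IsUnit (α f.leadingCoeff)) :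
    IsUnit (expand α f) := by
  have h0 : (expand α f).coeff (-f.natDegree) = α f.leadingCoeff := by
    rw [coeff_expand, if_pos (by omega)]; simp
  have hne : (expand α f).coeff (-f.natDegree) ≠ 0 := by rw [h0]; exact hf.ne_zero
  have hord : (expand α f).order = -f.natDegree := by
    refine le_antisymm (HahnSeries.order_le_of_coeff_ne_zero hne) ?_
    by_contra! hlt
    have hz : expand α f ≠ 0 := fun h => hne (by simp [h])
    refine hz (HahnSeries.coeff_order_eq_zero.1 ?_)
    rw [coeff_expand]
    split_ifs with h
    · rw [coeff_eq_zero_of_natDegree_lt (by omega), map_zero]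
    · rfl
  rw [HahnSeries.isUnit_iff, HahnSeries.leadingCoeff_eq, hord, h0]
  exact hf

/-- The unipotent matrix `1 + t * v * (v rotated by 90°)` over `P[t]`, where `v = (a, b)`. -/
def unip (a b : P) : SL2 P[X] :=
  ⟨!![1 - X * C (a * b), X * C (a * a); -(X * C (b * b)), 1 + X * C (a * b)], by
    rw [det_fin_two_of]; simp only [map_mul]; ring⟩

lemma inBranch_unip [IsDomain B] (α : P →+* B) {a b : P} (ha : α a ≠ 0) :
    InBranch ![α a, α b] (SpecialLinearGroup.map (expand α) (unip a b)) := by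
  have hentry (i j : Fin 2) : SpecialLinearGroup.map (expand α) (unip a b) i j =
    expand α ((!![1 - X * C (a * b), X * C (a * a); -(X * C (b * b)), 1 + X * C (a * b)] :
      Matrix (Fin 2) (Fin 2) P[X]) i j) := rfl
  refine ⟨1, !![-(α a * α b), α a * α a; -(α b * α b), α a * α b], ⟨?_, ?_, ?_⟩, one_pos, ?_⟩
  · intro i j k hk
    obtain ⟨n, hn, rfl⟩ : ∃ n : ℕ, 1 < n ∧ k = -n := ⟨(-k).toNat, by omega, by omega⟩
    rw [hentry, coeff_expand]
    obtain ⟨n, rfl⟩ : ∃ m, n = m + 2 := ⟨n - 2, by omega⟩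
    have h1 : (-(-((n + 2 : ℕ) : ℤ))).toNat = n + 2 := by omega
    rw [if_pos (by omega), h1]
    fin_cases i <;> fin_cases j <;> simp [-map_mul, coeff_one]
  · intro i j
    rw [hentry, coeff_expand]
    have h1 : (- -(1 : ℤ)).toNat = 0 + 1 := rfl
    rw [if_pos (by omega), h1]
    fin_cases i <;> fin_cases j <;> simp [coeff_X_mul, coeff_C, coeff_one]
  · exact ⟨0, 1, by simpa using ha⟩
  · intro j
    fin_cases j <;> simp <;> ring

theorem map_injective {A A' : Type*} [CommRing A] [CommRing A'] {ι : A →+* A'}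
    (hι : Function.Injective ι) :
    Function.Injective (SpecialLinearGroup.map (n := Fin 2) ι) := by
  intro x y h
  ext i j
  exact hι (congrArg (fun z : SL2 A' => z i j) h)

/-- A finitely generated group between `SL₂(R)` and `SL₂(F)` lives over `R[1/f]` for some `f ≠ 0`:
clear the denominators of the generators. -/
lemma exists_lift {R F : Type*} [CommRing R] [IsDomain R] [Field F] [Algebra R F]
    [IsFractionRing R F] (Γ : Subgroup (SL2 F))
    (hΓ : (SpecialLinearGroup.map (algebraMap R F)).range ≤ Γ) (hfg : Γ.FG) :
    ∃ f : R, f ≠ 0 ∧ ∃ G : Subgroup (SL2 (Localization.Away f)), G.FG ∧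
      (SpecialLinearGroup.map (algebraMap R (Localization.Away f))).range ≤ G := by
  obtain ⟨T, hT⟩ := hfg
  obtain ⟨⟨f, hf⟩, hden⟩ := IsLocalization.exist_integer_multiples_of_finite
    (nonZeroDivisors R) (fun x : T × Fin 2 × Fin 2 => x.1.1 x.2.1 x.2.2)
  have hf0 : f ≠ 0 := nonZeroDivisors.ne_zero hf
  have hfF : algebraMap R F f ≠ 0 := by simpa using hf0
  choose N hN using hden
  simp only [Algebra.smul_def] at hN
  refine ⟨f, hf0, ?_⟩
  set ι : Localization.Away f →+* F := IsLocalization.Away.lift f (IsUnit.mk0 _ hfF) with hι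
  have hιa : ∀ a, ι (algebraMap R _ a) = algebraMap R F a :=
    fun a => IsLocalization.Away.lift_eq f (IsUnit.mk0 _ hfF) a
  have hιinj : Function.Injective ι := by
    rw [injective_iff_map_eq_zero]
    intro x hx
    obtain ⟨n, a, ha⟩ := IsLocalization.Away.surj f x
    have hz : algebraMap R F a = 0 := by rw [← hιa, ← ha, map_mul, hx, zero_mul]
    rw [(map_eq_zero_iff _ (IsFractionRing.injective R F)).1 hz, map_zero] at ha
    exact (((IsLocalization.Away.algebraMap_isUnit f).pow n).mul_left_eq_zero).1 ha
  have hlift : ∀ t : T, ∃ t' : SL2 (Localization.Away f), SpecialLinearGroup.map ι t' = t := by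
    intro t
    let M : Matrix (Fin 2) (Fin 2) (Localization.Away f) := Matrix.of fun i j =>
      algebraMap R _ (N (t, i, j)) * IsLocalization.Away.invSelf f
    have hM : ∀ i j, ι (M i j) = t.1 i j := by
      intro i j
      have h1 : ι (IsLocalization.Away.invSelf f) * algebraMap R F f = 1 := by
        rw [← hιa, ← map_mul, mul_comm, IsLocalization.Away.mul_invSelf, map_one]
      have h2 := hN (t, i, j)
      simp only [M, of_apply, map_mul, hιa]
      dsimp only at h2
      rw [h2]
      linear_combination (t.1 i j) * h1
    have hdet : M.det = 1 := by
      apply hιinj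
      have h1 := t.1.det_coe
      rw [det_fin_two] at h1 ⊢
      rw [map_sub, map_mul, map_mul, hM, hM, hM, hM, map_one]
      exact h1
    exact ⟨⟨M, hdet⟩, by ext i j; exact hM i j⟩
  choose L hL using hlift
  set G : Subgroup (SL2 (Localization.Away f)) := Subgroup.closure (Set.range L) with hG
  have hmap : G.map (SpecialLinearGroup.map ι) = Γ := by
    rw [hG, MonoidHom.map_closure, ← hT]
    congr 1
    ext x
    simp only [Set.mem_image, Set.mem_range, exists_exists_eq_and, hL]
    simp
  refine ⟨G, (Subgroup.fg_iff _).2 ⟨_, rfl, Set.finite_range L⟩, ?_⟩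
  rintro _ ⟨r, rfl⟩
  have h1 : SpecialLinearGroup.map ι (SpecialLinearGroup.map (algebraMap R _) r) ∈ Γ := by
    refine hΓ ⟨r, ?_⟩
    ext i j
    exact (hιa _).symm
  rw [← hmap] at h1
  obtain ⟨g, hg, hgr⟩ := h1
  rw [← map_injective hιinj hgr]
  exact hg

/-- The statement for a ring `R` presented as `R₀[s][t]`. With `l` the leading coefficient of the
denominator `f`, the group is expanded into `SL₂(B((1/t)))` for `B = R₀[s][1/l]`, where its branches
through the vectors `(p, 1 + s * l)`, with `p` prime and not dividing `l`, are inequivalent. -/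
theorem not_fg {R₀ R F : Type*} [CommRing R₀] [IsDomain R₀] [IsNoetherianRing R₀]
    [CommRing R] [IsDomain R] [Field F] [Algebra R F] [IsFractionRing R F]
    (e : R ≃+* R₀[X][X])
    {S : Set R₀} (hinf : S.Infinite) (hS : ∀ p ∈ S, Prime p)
    (hSS : S.Pairwise fun p q => ¬ Associated p q) (Γ : Subgroup (SL2 F))
    (hΓ : (SpecialLinearGroup.map (algebraMap R F)).range ≤ Γ) : ¬ Γ.FG := by
  intro hfg
  obtain ⟨f, hf0, G, hG, hRG⟩ := exists_lift Γ hΓ hfg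
  set l := (e f).leadingCoeff with hl
  have hl0 : l ≠ 0 := by simpa [hl] using hf0
  let B := Localization.Away l
  have : IsDomain B := IsLocalization.isDomain_localization
    (powers_le_nonZeroDivisors_of_noZeroDivisors hl0)
  have hinj : Function.Injective (algebraMap R₀[X] B) :=
    IsLocalization.injective B (powers_le_nonZeroDivisors_of_noZeroDivisors hl0)
  set α := algebraMap R₀[X] B with hα
  have hu : IsUnit (((expand α).comp e.toRingHom) f) :=
    isUnit_expand α (IsLocalization.Away.algebraMap_isUnit l)
  let κ : Localization.Away f →+* HahnSeries ℤ B := IsLocalization.Away.lift f hu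
  have hκ : ∀ a, κ (algebraMap R _ a) = expand α (e a) :=
    fun a => IsLocalization.Away.lift_eq f hu a
  have hJ := infinite_not_dvd hinf hS hSS hl0
  have : Infinite {p ∈ S | ¬ C p ∣ l} := hJ.to_subtype
  have hG' : (G.map (SpecialLinearGroup.map κ)).FG := by
    obtain ⟨T, hT, hTfin⟩ := (Subgroup.fg_iff _).1 hG
    exact (Subgroup.fg_iff _).2 ⟨_, by rw [← hT, MonoidHom.map_closure], hTfin.image _⟩
  obtain ⟨⟨p, hp, hpl⟩, ⟨p', hp', _⟩, hne, U, hU, hU'⟩ := exists_equiv_of_fg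
    (J := {p ∈ S | ¬ C p ∣ l}) (fun p => ![α (C p.1), α (1 + X * l)])
    (fun p => by
      have : (p : R₀) ≠ 0 := (hS _ p.2.1).ne_zero
      simpa [map_eq_zero_iff α hinj] using this)
    (G.map (SpecialLinearGroup.map κ)) hG'
    (fun p => by
      refine ⟨_, ?_, inBranch_unip α (b := 1 + X * l) ?_⟩
      · refine ⟨_, hRG ⟨SpecialLinearGroup.map e.symm.toRingHom (unip (C p.1) (1 + X * l)), rfl⟩, ?_⟩
        ext1 i j
        refine (hκ _).trans (congrArg _ (e.apply_symm_apply _))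
      · have : (p : R₀) ≠ 0 := (hS _ p.2.1).ne_zero
        simpa [map_eq_zero_iff α hinj] using this)
  have hd := dvd_of_equiv (hS p hp) hpl U hU hU'
  exact hSS hp hp' (fun h => hne (Subtype.ext h))
    ((hS p hp).irreducible.associated_of_dvd (hS p' hp').irreducible hd)

/-- `R₀[s, t] ≃ R₀[s][t]`. -/
def mvEquiv (R₀ : Type*) [CommRing R₀] : MvPolynomial (Fin 2) R₀ ≃+* R₀[X][X] :=
  (MvPolynomial.finSuccEquiv R₀ 1).toRingEquiv.trans
    (Polynomial.mapEquiv (MvPolynomial.uniqueAlgEquiv R₀ (Fin 1)).toRingEquiv)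

end Assembly

end InfGen

/-- Let `R₀` be a finitely generated integral domain with infinitely many
pairwise non-associate prime elements, `R = R₀[s,t]` and `F` the field of fractions of `R`.
Then every group `Γ` with `SL₂(R) ≤ Γ ≤ SL₂(F)` is not finitely generated. -/
theorem statement0 (R₀ : Type*) [CommRing R₀] [IsDomain R₀] [Algebra.FiniteType ℤ R₀]
    (hprimes : ∃ P : Set R₀, P.Infinite ∧ (∀ p ∈ P, Prime p) ∧
      P.Pairwise fun p q => ¬ Associated p q)
    (Γ : Subgroup (SL2 (FractionRing (MvPolynomial (Fin 2) R₀))))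
    (hΓ : (Matrix.SpecialLinearGroup.map
        (algebraMap (MvPolynomial (Fin 2) R₀)
          (FractionRing (MvPolynomial (Fin 2) R₀)))).range ≤ Γ) :
    ¬ Γ.FG := by
  obtain ⟨P, hinf, hP, hPP⟩ := hprimes
  have : IsNoetherianRing R₀ := Algebra.FiniteType.isNoetherianRing ℤ R₀
  exact InfGen.not_fg (InfGen.mvEquiv R₀) hinf hP hPP Γ hΓ
end
end

section
/- Let R₀ be a finitely generated integral domain possessing infinitely many pairwise non-associate prime elements, let R = R₀[s,t] be the polynomial ring in two variables over R₀, and let F be the field of fractions of R. Then for every finitely generated R-subalgebra S of F, the group SL₂(R) is not contained in E₂(S). -/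
/-!
Every finitely generated `S` lies in some `R[1/f]` with `f ≠ 0`. Choose `N` so large that `f` has a
unique monomial of largest weight when `s` has weight `N` and `t` has weight `1`, and let `c` be its
coefficient. As `R₀` is Noetherian, some prime `p` of the given infinite family does not divide `c`.
Let `O` be the localization of `R₀` at `(p)` and `A = O⟦s,t⟧`. The substitution
`s ↦ (1 + s) / p ^ N`, `t ↦ (1 + t) / p` sends `f` to a power of `p⁻¹` times a power series with
constant coefficient in `c + pO`, a unit of `A[1/p]` (`isUnit_subst`). It therefore extends to
`R[1/f] → A[1/p]` and maps elementary matrices to elementary matrices.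

The matrix `1 + t (a, -b)ᵀ (b, a)` of `SL₂(R)`, with `a = p ^ N s - 1` and `b = p t - 1`, is sent to
`M = 1 + p⁻¹ (1 + t) (s, -t)ᵀ (t, s)`, and it remains to see that `M` is not elementary over
`A[1/p]` (`cohn_notMem`). In terms of the tree of the valuation of `p`: the vertices in the orbit of
the edge from `A²` to its neighbour form a subtree invariant under the elementary group, and the
neighbours of the base vertex in it are the lines modulo `p` spanned by a column of a matrix in
`SL₂(A)`. The path from the base vertex to its image under `M` passes through the line of `(s, -t)`,
which is not of this kind, since `s` and `t` both vanish at the closed point. The proof replaces the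
tree by an explicit normal form: with `d = diag(p, 1)`, every elementary matrix over `A[1/p]` is, up
to a power of `p`, a reduced product `k₀ d k₁ d ⋯ d kₙ` with `kᵢ ∈ SL₂(A)` (`Red`, `Red.diag_mul`,
`Elem.mem_stab`), which is nonzero modulo `p` and whose columns modulo `p` are proportional to the
second column of `k₀` (`exists_col_of_mem_stab`).
-/

open Matrix Pointwise

noncomputable section

/-! ### Reduced products

Write `d = diag(p, 1)`. -/

/-- `Red p N` says that `N` is a product `k₀ d k₁ d ⋯ d kₙ` with `kᵢ ∈ SL₂(A)` that is reduced: in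
each step the second row of the factor to the right of `d` is nonzero modulo `p`. Equivalently, the
corresponding path in the tree of `p` does not backtrack. -/
inductive Red {A : Type*} [CommRing A] (p : A) : Matrix (Fin 2) (Fin 2) A → Prop
  | base (k : Matrix (Fin 2) (Fin 2) A) (hk : k.det = 1) : Red p k
  | step (k N : Matrix (Fin 2) (Fin 2) A) (hk : k.det = 1) (hN : Red p N)
      (j : Fin 2) (hj : ¬ p ∣ N 1 j) : Red p (k * !![p, 0; 0, 1] * N)

section
variable {A : Type*} [CommRing A] {p : A}

lemma not_dvd_row_of_det (hp : Prime p) {k : Matrix (Fin 2) (Fin 2) A} (hk : k.det = 1)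
    (i : Fin 2) :
    ∃ j, ¬ p ∣ k i j := by
  by_contra! h
  apply hp.not_isUnit
  rw [isUnit_iff_dvd_one, ← hk, det_fin_two]
  fin_cases i
  · exact dvd_sub (Dvd.dvd.mul_right (h 0) _) (Dvd.dvd.mul_right (h 1) _)
  · exact dvd_sub (Dvd.dvd.mul_left (h 1) _) (Dvd.dvd.mul_left (h 0) _)

lemma not_dvd_col_of_det (hp : Prime p) {k : Matrix (Fin 2) (Fin 2) A} (hk : k.det = 1)
    (j : Fin 2) :
    ∃ i, ¬ p ∣ k i j := by
  simpa using not_dvd_row_of_det hp (k := kᵀ) (by rwa [det_transpose]) j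

lemma step_apply (k N : Matrix (Fin 2) (Fin 2) A) (i j : Fin 2) :
    (k * !![p, 0; 0, 1] * N) i j = p * (k i 0 * N 0 j) + k i 1 * N 1 j := by
  simp [mul_apply, Fin.sum_univ_two]; ring

/-- A reduced product is nonzero modulo `p`. -/
lemma Red.primitive (hp : Prime p) {N : Matrix (Fin 2) (Fin 2) A} (h : Red p N) :
    ∃ i j, ¬ p ∣ N i j := by
  cases h with
  | base _ hk => exact ⟨1, not_dvd_row_of_det hp hk 1⟩
  | step k N hk hN j hj =>
    obtain ⟨i, hi⟩ := not_dvd_col_of_det hp hk 1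
    refine ⟨i, j, fun h => ?_⟩
    rw [step_apply, dvd_add_right (dvd_mul_right _ _)] at h
    exact (hp.dvd_or_dvd h).elim hi hj

lemma Red.mul_left {N k : Matrix (Fin 2) (Fin 2) A} (h : Red p N) (hk : k.det = 1) :
    Red p (k * N) := by
  cases h with
  | base k' hk' => exact .base _ (by rw [det_mul, hk, hk', one_mul])
  | step k' N hk' hN j hj =>
    rw [← mul_assoc, ← mul_assoc]
    exact .step _ _ (by rw [det_mul, hk, hk', one_mul]) hN j hj

/-- Multiplying a reduced product by `d` gives a reduced product up to a power of `p`. When the new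
product `d k₀ d ⋯` is not reduced, `p` divides the lower right entry of `k₀`, and then
`d k₀ d = p k'` with `k' ∈ SL₂(A)`. -/
lemma Red.diag_mul (hp : Prime p) {N : Matrix (Fin 2) (Fin 2) A} (h : Red p N) :
    ∃ (n : ℕ) (N' : Matrix (Fin 2) (Fin 2) A), Red p N' ∧ !![p, 0; 0, 1] * N = p ^ n • N' := by
  by_cases hrow : ∃ j, ¬ p ∣ N 1 j
  · obtain ⟨j, hj⟩ := hrow
    exact ⟨0, _, .step 1 N (by simp) h j hj, by simp⟩
  · push Not at hrow
    cases h with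
    | base _ hk =>
      obtain ⟨j, hj⟩ := not_dvd_row_of_det hp hk 1
      exact (hj (hrow j)).elim
    | step k N hk hN j hj =>
      have h1 := hrow j
      rw [step_apply, dvd_add_right (dvd_mul_right _ _)] at h1
      obtain ⟨e, he⟩ := (hp.dvd_or_dvd h1).resolve_right hj
      refine ⟨1, !![p * k 0 0, k 0 1; k 1 0, e] * N, hN.mul_left ?_, ?_⟩
      · rw [← hk, det_fin_two_of, det_fin_two, he]; ring
      · rw [← mul_assoc, ← smul_mul_assoc, ← mul_assoc]
        congr 1
        rw [eta_fin_two k, he]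
        ext i j
        fin_cases i <;> fin_cases j <;> simp [mul_comm]

end

section
variable {A B : Type*} [CommRing A] [CommRing B] [Algebra A B]

/-- The matrices over `B` that agree with a reduced product up to powers of `p`. -/
def Good (p : A) (B : Type*) [CommRing B] [Algebra A B] : Set (Matrix (Fin 2) (Fin 2) B) :=
  {g | ∃ (m n : ℕ) (N : Matrix (Fin 2) (Fin 2) A), Red p N ∧
    (algebraMap A B p) ^ m • g = (algebraMap A B p) ^ n • N.map (algebraMap A B)}

/-- The matrices whose left multiplication preserves `Good p B`. -/
def stab (p : A) (B : Type*) [CommRing B] [Algebra A B] :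
    Submonoid (Matrix (Fin 2) (Fin 2) B) where
  carrier := {h | ∀ g ∈ Good p B, h * g ∈ Good p B}
  one_mem' := by simp
  mul_mem' := fun {a b} ha hb g hg => by
    rw [mul_assoc]; exact ha _ (hb _ hg)

lemma mem_stab_of_det {p : A} {k : Matrix (Fin 2) (Fin 2) A} (hk : k.det = 1) :
    k.map (algebraMap A B) ∈ stab p B := by
  rintro g ⟨m, n, N, hN, h⟩
  refine ⟨m, n, k * N, hN.mul_left hk, ?_⟩
  rw [← mul_smul_comm, h, mul_smul_comm, Matrix.map_mul]

lemma diag_mem_stab {p : A} (hp : Prime p) :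
    !![algebraMap A B p, 0; 0, 1] ∈ stab p B := by
  rintro g ⟨m, n, N, hN, h⟩
  obtain ⟨l, N', hN', h'⟩ := hN.diag_mul hp
  refine ⟨m, n + l, N', hN', ?_⟩
  have h2 := congrArg (fun M => M.map (algebraMap A B)) h'
  simp only [Matrix.map_mul] at h2
  rw [← mul_smul_comm, h, mul_smul_comm, pow_add, mul_smul]
  congr 1
  convert h2 using 1
  · congr 1; ext i j; fin_cases i <;> fin_cases j <;> simp
  · ext i j; simp

lemma diag_mem_stab' {p : A} (hp : Prime p) {q : B} (hq : algebraMap A B p * q = 1) :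
    !![q, 0; 0, 1] ∈ stab p B := by
  -- `diag(p⁻¹, 1) = p⁻¹ · w diag(p, 1) w⁻¹`
  have hw : !![(0:A), 1; -1, 0].map (algebraMap A B) ∈ stab p B := mem_stab_of_det (by simp)
  have hw' : !![(0:A), -1; 1, 0].map (algebraMap A B) ∈ stab p B := mem_stab_of_det (by simp)
  have h := mul_mem (mul_mem hw (diag_mem_stab (B := B) hp)) hw'
  rintro g hg
  obtain ⟨m, n, N, hN, h⟩ := h g hg
  refine ⟨m + 1, n, N, hN, ?_⟩
  rw [← h, pow_succ, mul_smul, ← smul_mul_assoc]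
  congr 2
  ext i j; fin_cases i <;> fin_cases j <;> simp [mul_apply, Fin.sum_univ_two, hq]

/-- Elementary matrices over `A[1/p]` are conjugates of elementary matrices over `A` by powers of
`d`. Here `q` is the inverse of `p` in `B`. -/
lemma elem_mem_stab {p : A} (hp : Prime p) {q : B} (hq : algebraMap A B p * q = 1) (n : ℕ) (a : A) :
    !![1, q ^ n * algebraMap A B a; 0, 1] ∈ stab p B ∧
      !![1, 0; q ^ n * algebraMap A B a, 1] ∈ stab p B := by
  induction n with
  | zero =>
    constructor
    · convert mem_stab_of_det (B := B) (p := p) (k := !![1, a; 0, 1]) (by simp) using 1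
      ext i j; fin_cases i <;> fin_cases j <;> simp
    · convert mem_stab_of_det (B := B) (p := p) (k := !![1, 0; a, 1]) (by simp) using 1
      ext i j; fin_cases i <;> fin_cases j <;> simp
  | succ n ih =>
    have hq' : q * algebraMap A B p = 1 := by rw [mul_comm, hq]
    have hs : p • q = 1 := by rw [Algebra.smul_def, hq]
    constructor
    · convert mul_mem (mul_mem (diag_mem_stab' hp hq) ih.1) (diag_mem_stab hp) using 1
      ext i j; fin_cases i <;> fin_cases j <;> simp [mul_apply, Fin.sum_univ_two, hq']
      ring
    · convert mul_mem (mul_mem (diag_mem_stab hp) ih.2) (diag_mem_stab' hp hq) using 1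
      ext i j; fin_cases i <;> fin_cases j <;> simp <;>
        first | exact hs.symm | ring1

/-- A reduced product of determinant other than `1` has the form `N = k d N'`. It is congruent
modulo `p` to the second column of `k` times the second row of `N'`, so its columns are proportional
modulo `p` to that column of `k`. -/
lemma Red.exists_col {p : A} {N : Matrix (Fin 2) (Fin 2) A} (h : Red p N)
    (hdet : N.det ≠ 1) :
    ∃ k : Matrix (Fin 2) (Fin 2) A, k.det = 1 ∧ ∀ j, p ∣ k 1 1 * N 0 j - k 0 1 * N 1 j := by
  cases h with
  | base _ hk => exact (hdet hk).elim
  | step k N hk hN j hj =>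
    refine ⟨k, hk, fun j => ?_⟩
    rw [step_apply, step_apply]
    exact ⟨k 1 1 * (k 0 0 * N 0 j) - k 0 1 * (k 1 0 * N 0 j), by ring⟩

lemma eq_of_pow_smul_eq [IsDomain A] {p : A} (hp : Prime p) {N P : Matrix (Fin 2) (Fin 2) A}
    {m n : ℕ}
    (hN : ∃ i j, ¬ p ∣ N i j) (hP : ∃ i j, ¬ p ∣ P i j) (h : p ^ m • P = p ^ n • N) : P = N := by
  wlog hmn : m ≤ n generalizing m n N P
  · exact (this hP hN h.symm (by omega)).symm
  obtain ⟨l, rfl⟩ := Nat.exists_eq_add_of_le hmn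
  have h2 : P = p ^ l • N := by
    ext i j
    have := congrFun (congrFun h i) j
    simp only [Matrix.smul_apply, smul_eq_mul, pow_add, mul_assoc] at this
    simpa using mul_left_cancel₀ (pow_ne_zero m hp.ne_zero) this
  cases l with
  | zero => simpa using h2
  | succ l =>
    obtain ⟨i, j, hij⟩ := hP
    refine (hij ?_).elim
    rw [h2, Matrix.smul_apply, smul_eq_mul, pow_succ', mul_assoc]
    exact dvd_mul_right _ _

/-- If `p g = P` has entries in `A` and is nonzero modulo `p`, then `P` itself is a reduced product;
hence, if `det P ≠ 1`, the columns of `P` are proportional modulo `p` to a column of a matrix in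
`SL₂(A)`. -/
lemma exists_col_of_mem_stab [IsDomain A] {p : A} (hp : Prime p)
    (hinj : Function.Injective (algebraMap A B))
    {g : Matrix (Fin 2) (Fin 2) B} (hg : g ∈ stab p B) {P : Matrix (Fin 2) (Fin 2) A}
    (hP : ∃ i j, ¬ p ∣ P i j) (hdet : P.det ≠ 1)
    (hgP : algebraMap A B p • g = P.map (algebraMap A B)) :
    ∃ k : Matrix (Fin 2) (Fin 2) A, k.det = 1 ∧ ∀ j, p ∣ k 1 1 * P 0 j - k 0 1 * P 1 j := by
  have h1 : (1 : Matrix (Fin 2) (Fin 2) B) ∈ Good p B :=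
    ⟨0, 0, 1, .base _ (by simp), by simp⟩
  obtain ⟨m, n, N, hN, h⟩ := hg 1 h1
  rw [mul_one] at h
  have h2 : p ^ m • P = p ^ (n + 1) • N := by
    apply Matrix.map_injective hinj
    have h3 : algebraMap A B p ^ m • P.map (algebraMap A B) =
        algebraMap A B p ^ (n + 1) • N.map (algebraMap A B) := by
      rw [← hgP, smul_comm, h, ← mul_smul, pow_succ']
    ext i j
    simpa using congrFun (congrFun h3 i) j
  obtain rfl := eq_of_pow_smul_eq hp (hN.primitive hp) hP h2
  exact hN.exists_col hdet

end

/-! ### Choice of the prime -/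

/-- In a Noetherian domain a nonzero element has only finitely many prime divisors up to
associates: divide by one of them and induct. -/
lemma exists_prime_not_dvd {R : Type*} [CommRing R] [IsDomain R] [IsNoetherianRing R] (c : R)
    (hc : c ≠ 0) : ∀ P : Set R, P.Infinite → (∀ p ∈ P, Prime p) →
      (P.Pairwise fun p q => ¬ Associated p q) → ∃ p ∈ P, ¬ p ∣ c := by
  induction c using (wellFounded_dvdNotUnit (α := R)).induction with
  | _ c ih =>
  intro P hP hprime hpair
  by_contra! hall
  obtain ⟨p, hp⟩ := hP.nonempty
  obtain ⟨d, rfl⟩ := hall p hp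
  obtain ⟨q, ⟨hq, hqp⟩, hqd⟩ := ih d
    ⟨right_ne_zero_of_mul hc, p, (hprime p hp).not_isUnit, mul_comm _ _⟩
    (right_ne_zero_of_mul hc) (P \ {p}) (hP.sdiff (Set.finite_singleton p))
    (fun q hq => hprime q hq.1) (hpair.mono Set.sdiff_subset)
  rcases (hprime q hq).dvd_or_dvd (hall q hq) with h | h
  · exact hpair hq hp hqp ((hprime q hq).associated_of_dvd (hprime p hp) h)
  · exact hqd h

/-! ### Power series in two variables -/

lemma C_dvd_iff {σ O : Type*} [CommRing O] (p : O) (φ : MvPowerSeries σ O) :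
    MvPowerSeries.C p ∣ φ ↔ ∀ n, p ∣ MvPowerSeries.coeff n φ := by
  constructor
  · rintro ⟨ψ, rfl⟩ n
    rw [MvPowerSeries.coeff_C_mul]
    exact dvd_mul_right _ _
  · intro h
    choose ψ hψ using h
    refine ⟨(show MvPowerSeries σ O from ψ), ?_⟩
    ext n
    rw [MvPowerSeries.coeff_C_mul, hψ]
    rfl

/-- The quotient of a power series ring by `p` is the power series ring over `O / p`, a domain. -/
lemma prime_C {σ O : Type*} [CommRing O] {p : O} (hp : Prime p) :
    Prime (MvPowerSeries.C p : MvPowerSeries σ O) := by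
  have : (Ideal.span {p}).IsPrime := (Ideal.span_singleton_prime hp.ne_zero).2 hp
  have key (φ : MvPowerSeries σ O) : MvPowerSeries.C p ∣ φ ↔
      MvPowerSeries.map (Ideal.Quotient.mk (Ideal.span {p})) φ = 0 := by
    rw [C_dvd_iff, MvPowerSeries.ext_iff]
    simp [Ideal.Quotient.eq_zero_iff_mem, Ideal.mem_span_singleton]
  refine ⟨?_, ?_, fun φ ψ h => ?_⟩
  · rw [Ne, ← map_zero MvPowerSeries.C]
    exact fun h => hp.ne_zero (MvPowerSeries.C_injective h)
  · exact fun h => hp.not_isUnit (by simpa using h.map MvPowerSeries.constantCoeff)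
  · rw [key, map_mul, mul_eq_zero] at h
    rwa [key, key]

section
variable {O : Type*} [CommRing O] {p : O}
open MvPowerSeries

lemma not_C_dvd_X (hp : Prime p) (i : Fin 2) : ¬ C p ∣ (X i : MvPowerSeries (Fin 2) O) := by
  rw [C_dvd_iff]
  intro h
  have := h (Finsupp.single i 1)
  rw [coeff_index_single_self_X] at this
  exact hp.not_isUnit (isUnit_of_dvd_one this)

lemma not_C_dvd_one_add_X (hp : Prime p) (i : Fin 2) :
    ¬ C p ∣ (1 + X i : MvPowerSeries (Fin 2) O) := by
  rw [C_dvd_iff]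
  intro h
  have := h 0
  rw [map_add, coeff_zero_X, coeff_zero_one, add_zero] at this
  exact hp.not_isUnit (isUnit_of_dvd_one this)

/-- Compare the coefficients of `s` and of `t`. -/
lemma dvd_constantCoeff {u v : MvPowerSeries (Fin 2) O} (h : C p ∣ v * X 0 + u * X 1) :
    p ∣ constantCoeff v ∧ p ∣ constantCoeff u := by
  rw [C_dvd_iff] at h
  have e (w : MvPowerSeries (Fin 2) O) (i j : Fin 2) : coeff (Finsupp.single i 1) (w * X j) =
      if i = j then constantCoeff w else 0 := by
    rw [X_def, coeff_mul_monomial]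
    simp only [Finsupp.single_le_iff]
    by_cases hij : i = j
    · subst hij; simp
    · simp [hij]
  have h0 := h (Finsupp.single 0 1)
  have h1 := h (Finsupp.single 1 1)
  simp only [map_add, e] at h0 h1
  simpa using And.intro h0 h1

end

/-! ### The substitution -/

/-- For suitable weights `N` of `s` and `1` of `t`, a nonzero polynomial has a unique monomial of
largest weight. -/
lemma exists_weight {R : Type*} [CommRing R] (f : MvPolynomial (Fin 2) R) (hf : f ≠ 0) :
    ∃ (N : ℕ) (m : Fin 2 →₀ ℕ), f.coeff m ≠ 0 ∧
      ∀ n ∈ f.support, n ≠ m → N * n 0 + n 1 < N * m 0 + m 1 := by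
  -- With `N` larger than every exponent of `t`, the weight determines the monomial.
  set N := f.totalDegree + 1
  obtain ⟨m, hm, hmax⟩ := f.support.exists_max_image (fun n => N * n 0 + n 1)
    (by simpa [Finset.nonempty_iff_ne_empty] using hf)
  have hN (n) (hn : n ∈ f.support) : n 1 < N := by
    have := MvPolynomial.le_totalDegree hn
    rw [Finsupp.sum_fintype _ _ (by simp), Fin.sum_univ_two] at this
    omega
  refine ⟨N, m, by simpa using hm, fun n hn hne => (hmax n hn).lt_of_ne fun h => hne ?_⟩
  have h1 : n 1 = m 1 := by
    have := congrArg (· % N) h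
    simpa [Nat.mod_eq_of_lt (hN n hn), Nat.mod_eq_of_lt (hN m hm)] using this
  have h0 : n 0 = m 0 := by
    rw [h1] at h
    exact Nat.eq_of_mul_eq_mul_left (by omega : 0 < N) (by omega)
  ext i; fin_cases i <;> assumption

/-- Under `s ↦ (1 + s) / p ^ N`, `t ↦ (1 + t) / p` the image of `f` is, up to a power of `p`, a power
series whose constant coefficient is the leading coefficient of `f` plus a multiple of `p`. Here `q`
is the inverse of `p` in `B`. -/
lemma isUnit_subst {R O B : Type*} [CommRing R] [CommRing O] [IsLocalRing O] [Algebra R O]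
    [CommRing B] (ι : MvPowerSeries (Fin 2) O →+* B) (σ : MvPolynomial (Fin 2) R →+* B) (p : R)
    (hp : ¬ IsUnit (algebraMap R O p))
    {q : B} (hq : ι (MvPowerSeries.C (algebraMap R O p)) * q = 1)
    (hC : ∀ r, σ (MvPolynomial.C r) = ι (MvPowerSeries.C (algebraMap R O r)))
    (N : ℕ)
    (h0 : σ (MvPolynomial.X 0) = q ^ N * ι (1 + MvPowerSeries.X 0))
    (h1 : σ (MvPolynomial.X 1) = q * ι (1 + MvPowerSeries.X 1))
    (f : MvPolynomial (Fin 2) R) (m : Fin 2 →₀ ℕ) (hm : IsUnit (algebraMap R O (f.coeff m)))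
    (hmax : ∀ n ∈ f.support, n ≠ m → N * n 0 + n 1 < N * m 0 + m 1) : IsUnit (σ f) := by
  set a := algebraMap R O
  set w : (Fin 2 →₀ ℕ) → ℕ := fun n => N * n 0 + n 1
  have hle : ∀ n ∈ f.support, w n ≤ w m := fun n hn => by
    by_cases h : n = m
    · rw [h]
    · exact (hmax n hn h).le
  let G : MvPowerSeries (Fin 2) O := ∑ n ∈ f.support, MvPowerSeries.C (a (f.coeff n)) *
    (MvPowerSeries.C (a p)) ^ (w m - w n) *
      ((1 + MvPowerSeries.X 0) ^ n 0 * (1 + MvPowerSeries.X 1) ^ n 1)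
  -- `G = p ^ w(m) * σ(f)`; the subtraction of weights does not truncate, by `hle`.
  have hG : ι (MvPowerSeries.C (a p)) ^ w m * σ f = ι G := by
    conv_lhs => rw [f.as_sum]
    rw [map_sum, map_sum, Finset.mul_sum]
    refine Finset.sum_congr rfl fun n hn => ?_
    rw [MvPolynomial.monomial_eq, Finsupp.prod_fintype _ _ (by simp), Fin.prod_univ_two]
    simp only [map_mul, map_pow, hC, h0, h1]
    obtain ⟨l, hl⟩ := Nat.exists_eq_add_of_le (hle n hn)
    have e : (ι (MvPowerSeries.C (a p)) * q) ^ w n = 1 := by rw [hq, one_pow]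
    have e2 : q ^ w n = (q ^ N) ^ n 0 * q ^ n 1 := by
      rw [← pow_mul, ← pow_add]
    rw [hl, Nat.add_sub_cancel_left, pow_add]
    rw [mul_pow, e2] at e
    rw [mul_pow, mul_pow]
    linear_combination (ι (MvPowerSeries.C (a (f.coeff n))) * ι (MvPowerSeries.C (a p)) ^ l *
      ι (1 + MvPowerSeries.X 0) ^ n 0 * ι (1 + MvPowerSeries.X 1) ^ n 1) * e
  have hGu : IsUnit G := by
    rw [MvPowerSeries.isUnit_iff_constantCoeff]
    have hcc : MvPowerSeries.constantCoeff G =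
        ∑ n ∈ f.support, a (f.coeff n) * a p ^ (w m - w n) := by
      simp [G]
    have hms : m ∈ f.support := by
      rw [MvPolynomial.mem_support_iff]
      intro h
      rw [h, map_zero] at hm
      exact not_isUnit_zero hm
    rw [hcc, ← Finset.add_sum_erase _ _ hms]
    rw [← not_not (a := IsUnit _), ← mem_nonunits_iff, ← IsLocalRing.mem_maximalIdeal]
    have hsum : ∑ n ∈ f.support.erase m, a (f.coeff n) * a p ^ (w m - w n) ∈
        IsLocalRing.maximalIdeal O := by
      refine Ideal.sum_mem _ fun n hn => Ideal.mul_mem_left _ _ (Ideal.pow_mem_of_mem _ ?_ _ ?_)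
      · exact hp
      · have := hmax n (Finset.mem_of_mem_erase hn) (Finset.ne_of_mem_erase hn)
        exact Nat.sub_pos_of_lt this
    rw [Ideal.add_mem_iff_left _ hsum]
    simpa using hm
  exact isUnit_of_mul_isUnit_right (hG ▸ hGu.map ι)

/-! ### Cohn's matrix and the elementary group -/

/-- The unipotent matrix `1 + w · (a, -b)ᵀ (b, a)`, which fixes the vector `(a, -b)ᵀ`. For `w = 1`
this is Cohn's classical example of a non-elementary matrix over a polynomial ring in `a, b`. -/
def cohn {A : Type*} [CommRing A] (w a b : A) : SL2 A :=
  ⟨!![1 + w * a * b, w * a ^ 2; -(w * b ^ 2), 1 - w * a * b], by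
    rw [Matrix.det_fin_two_of]; ring⟩

lemma map_E12 {A B : Type*} [CommRing A] [CommRing B] (φ : A →+* B) (r : A) :
    Matrix.SpecialLinearGroup.map φ (E12 r) = E12 (φ r) := by
  ext i j
  change φ ((E12 r : Matrix (Fin 2) (Fin 2) A) i j) = _
  fin_cases i <;> fin_cases j <;> simp [E12]

lemma map_E21 {A B : Type*} [CommRing A] [CommRing B] (φ : A →+* B) (r : A) :
    Matrix.SpecialLinearGroup.map φ (E21 r) = E21 (φ r) := by
  ext i j
  change φ ((E21 r : Matrix (Fin 2) (Fin 2) A) i j) = _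
  fin_cases i <;> fin_cases j <;> simp [E21]

lemma map_cohn {A B : Type*} [CommRing A] [CommRing B] (φ : A →+* B) (w a b : A) :
    Matrix.SpecialLinearGroup.map φ (cohn w a b) = cohn (φ w) (φ a) (φ b) := by
  ext i j
  change φ ((cohn w a b : Matrix (Fin 2) (Fin 2) A) i j) = _
  fin_cases i <;> fin_cases j <;> simp [cohn]

/-- The elementary subgroup of `SL₂(A)` for an abstract commutative ring `A`, the counterpart of
`E2`, which lives in the `SL₂` of an ambient field. -/
def Elem (A : Type*) [CommRing A] : Subgroup (SL2 A) :=
  Subgroup.closure {g | ∃ r, g = E12 r ∨ g = E21 r}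

lemma Elem.map_le {A B : Type*} [CommRing A] [CommRing B] (φ : A →+* B) {g : SL2 A}
    (hg : g ∈ Elem A) : Matrix.SpecialLinearGroup.map φ g ∈ Elem B := by
  have : (Elem A) ≤ (Elem B).comap (Matrix.SpecialLinearGroup.map φ) := by
    refine (Subgroup.closure_le _).2 ?_
    rintro _ ⟨r, rfl | rfl⟩
    · exact Subgroup.subset_closure ⟨φ r, .inl (map_E12 φ r)⟩
    · exact Subgroup.subset_closure ⟨φ r, .inr (map_E21 φ r)⟩
  exact this hg

lemma Elem.mem_stab {A B : Type*} [CommRing A] [CommRing B] [Algebra A B] {p : A} (hp : Prime p)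
    [IsLocalization.Away p B] {g : SL2 B} (hg : g ∈ Elem B) : (g : Matrix _ _ B) ∈ stab p B := by
  have hq := IsLocalization.Away.mul_invSelf (S := B) p
  set q : B := IsLocalization.Away.invSelf p
  have hE (b : B) : (E12 b : Matrix _ _ B) ∈ stab p B ∧ (E21 b : Matrix _ _ B) ∈ stab p B := by
    obtain ⟨n, a, h⟩ := IsLocalization.Away.surj p b
    have hb : b = q ^ n * algebraMap A B a := by
      rw [← h, mul_left_comm, ← mul_pow, mul_comm q, hq, one_pow, mul_one]
    rw [hb]
    exact elem_mem_stab hp hq n a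
  have key : (g : Matrix _ _ B) ∈ stab p B ∧ ((g⁻¹ : SL2 B) : Matrix _ _ B) ∈ stab p B := by
    induction hg using Subgroup.closure_induction with
    | mem x hx =>
      obtain ⟨r, rfl | rfl⟩ := hx
      · refine ⟨(hE r).1, ?_⟩
        have hinv : (E12 r)⁻¹ = E12 (-r) := inv_eq_of_mul_eq_one_right (by
          ext i j; rw [Matrix.SpecialLinearGroup.coe_mul]
          fin_cases i <;> fin_cases j <;> simp [E12])
        rw [hinv]
        exact (hE (-r)).1
      · refine ⟨(hE r).2, ?_⟩
        have hinv : (E21 r)⁻¹ = E21 (-r) := inv_eq_of_mul_eq_one_right (by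
          ext i j; rw [Matrix.SpecialLinearGroup.coe_mul]
          fin_cases i <;> fin_cases j <;> simp [E21])
        rw [hinv]
        exact (hE (-r)).2
    | one => simp [one_mem]
    | mul x y _ _ hx hy =>
      rw [_root_.mul_inv_rev, Matrix.SpecialLinearGroup.coe_mul, Matrix.SpecialLinearGroup.coe_mul]
      exact ⟨mul_mem hx.1 hy.1, mul_mem hy.2 hx.2⟩
    | inv x _ hx => rw [inv_inv]; exact hx.symm
  exact key.1

/-- The contradiction with `exists_col_of_mem_stab`: over `O⟦s,t⟧` the vector `(s, -t)` is not
proportional modulo `p` to a column of a matrix in `SL₂(O⟦s,t⟧)`, so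
`1 + p⁻¹(1 + t) · (s, -t)ᵀ (t, s)` is not elementary over `O⟦s,t⟧[1/p]`. -/
lemma cohn_notMem {O B : Type*} [CommRing O] [IsDomain O] [CommRing B]
    [Algebra (MvPowerSeries (Fin 2) O) B] {p : O} (hp : Prime p)
    [IsLocalization.Away (MvPowerSeries.C p : MvPowerSeries (Fin 2) O) B] {q : B}
    (hq : algebraMap (MvPowerSeries (Fin 2) O) B (MvPowerSeries.C p) * q = 1) :
    cohn (q * algebraMap (MvPowerSeries (Fin 2) O) B (1 + MvPowerSeries.X 1))
      (algebraMap (MvPowerSeries (Fin 2) O) B (MvPowerSeries.X 0))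
      (algebraMap (MvPowerSeries (Fin 2) O) B (MvPowerSeries.X 1)) ∉ Elem B := by
  intro hmem
  have hP : Prime (MvPowerSeries.C p : MvPowerSeries (Fin 2) O) := prime_C hp
  set π : MvPowerSeries (Fin 2) O := MvPowerSeries.C p with hπ
  set s : MvPowerSeries (Fin 2) O := MvPowerSeries.X 0 with hs
  set t : MvPowerSeries (Fin 2) O := MvPowerSeries.X 1 with ht
  have hpt : ¬ π ∣ t := not_C_dvd_X hp 1
  have hpt' : ¬ π ∣ 1 + t := not_C_dvd_one_add_X hp 1
  have : IsDomain (MvPowerSeries (Fin 2) O) := NoZeroDivisors.to_isDomain _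
  have hinj : Function.Injective (algebraMap (MvPowerSeries (Fin 2) O) B) :=
    IsLocalization.injective B (powers_le_nonZeroDivisors_of_noZeroDivisors hP.ne_zero)
  -- `p` times the matrix in question; modulo `p` it is the rank one matrix `(1+t)(s,-t)ᵀ(t,s)`.
  let P : Matrix (Fin 2) (Fin 2) (MvPowerSeries (Fin 2) O) :=
    !![π + (1 + t) * s * t, (1 + t) * s ^ 2; -((1 + t) * t ^ 2), π - (1 + t) * s * t]
  obtain ⟨k, hk, hkP⟩ := exists_col_of_mem_stab (P := P) hP hinj (Elem.mem_stab hP hmem)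
    ⟨1, 0, by
      simp only [P, of_apply, cons_val', cons_val_zero, cons_val_one, cons_val_fin_one, dvd_neg]
      exact hP.dvd_mul.not.2 (not_or.2 ⟨hpt', fun h => hpt (hP.dvd_of_dvd_pow h)⟩)⟩
    (by
      have : P.det = π * π := by rw [det_fin_two_of]; ring
      rw [this]
      exact fun h => hP.not_isUnit (.of_mul_eq_one _ h))
    (by
      ext i j
      fin_cases i <;> fin_cases j <;> simp [cohn, P] <;> grind)
  have h0 : π ∣ (1 + t) * (t * (k 1 1 * s + k 0 1 * t)) := by
    have h := hkP 0
    simp only [P, of_apply, cons_val', cons_val_zero, cons_val_one, cons_val_fin_one] at h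
    have e : k 1 1 * (π + (1 + t) * s * t) - k 0 1 * -((1 + t) * t ^ 2) =
      π * k 1 1 + (1 + t) * (t * (k 1 1 * s + k 0 1 * t)) := by ring
    rwa [e, dvd_add_right (dvd_mul_right _ _)] at h
  obtain ⟨hv, hu⟩ := dvd_constantCoeff
    ((hP.dvd_or_dvd ((hP.dvd_or_dvd h0).resolve_left hpt')).resolve_left hpt)
  apply hp.not_isUnit
  have hone := congrArg MvPowerSeries.constantCoeff hk
  rw [det_fin_two, map_sub, map_mul, map_mul, map_one] at hone
  rw [isUnit_iff_dvd_one, ← hone]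
  exact dvd_sub (hv.mul_left _) (hu.mul_right _)

/-! ### Conclusion -/

/-- A finitely generated `S` lies in `R[1/f]` for some `f ≠ 0`, and membership in `E₂(S)` gives
membership in the elementary group of the abstract localization `R[1/f]`, which (unlike `S`) comes
with a universal property. -/
lemma exists_denominator {R F : Type*} [CommRing R] [IsDomain R] [Field F] [Algebra R F]
    [IsFractionRing R F] (S : Subalgebra R F) (hS : S.FG) :
    ∃ f : R, f ≠ 0 ∧ ∀ g : SL2 R,
      Matrix.SpecialLinearGroup.map (algebraMap R F) g ∈ E2 S.toSubring →
      Matrix.SpecialLinearGroup.map (algebraMap R (Localization.Away f)) g ∈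
        Elem (Localization.Away f) := by
  obtain ⟨T, rfl⟩ := hS
  obtain ⟨f, hf⟩ := IsLocalization.exist_integer_multiples_of_finset (nonZeroDivisors R) T
  have hf0 : (f : R) ≠ 0 := nonZeroDivisors.coe_ne_zero f
  refine ⟨f, hf0, fun g hg => ?_⟩
  have hfF : algebraMap R F f ≠ 0 := by simp [hf0]
  let j : Localization.Away (f : R) →ₐ[R] F :=
    IsLocalization.liftAlgHom (M := Submonoid.powers (f : R)) (f := Algebra.ofId R F) (by
      rintro ⟨_, n, rfl⟩
      exact (IsUnit.mk0 _ (by simp [hf0])))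
  have hj : Function.Injective j := by
    have : IsDomain (Localization.Away (f : R)) := IsLocalization.isDomain_localization
      (powers_le_nonZeroDivisors_of_noZeroDivisors hf0)
    rw [injective_iff_map_eq_zero]
    intro z hz
    obtain ⟨n, a, h⟩ := IsLocalization.Away.surj (f : R) z
    have h2 := congrArg j h
    rw [map_mul, hz, zero_mul, AlgHom.commutes] at h2
    have h3 : a = 0 := by simpa using h2.symm
    rw [h3, map_zero] at h
    refine (mul_eq_zero.1 h).resolve_right (pow_ne_zero _ ?_)
    exact (IsLocalization.Away.algebraMap_isUnit (f : R)).ne_zero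
  have hle : Algebra.adjoin R (T : Set F) ≤ j.range := by
    refine Algebra.adjoin_le fun x hx => ?_
    obtain ⟨r, hr⟩ := hf x hx
    refine ⟨algebraMap R _ r * IsLocalization.Away.invSelf (f : R), ?_⟩
    apply mul_right_cancel₀ hfF
    have h1 := IsLocalization.Away.mul_invSelf (S := Localization.Away (f : R)) (f : R)
    have h2 : algebraMap R F f * j (IsLocalization.Away.invSelf (f : R)) = 1 := by
      rw [← AlgHom.commutes j, ← map_mul, h1, map_one]
    rw [Algebra.smul_def] at hr
    change j _ * _ = _
    rw [map_mul, AlgHom.commutes, hr]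
    linear_combination (algebraMap R F f * x) * h2
  have hE2 : E2 (Algebra.adjoin R (T : Set F)).toSubring ≤
      (Elem (Localization.Away (f : R))).map (Matrix.SpecialLinearGroup.map (j : _ →+* F)) := by
    refine (Subgroup.closure_le _).2 ?_
    rintro _ ⟨r, hr, h⟩
    obtain ⟨z, rfl⟩ := hle hr
    rcases h with rfl | rfl
    · exact ⟨E12 z, Subgroup.subset_closure ⟨z, .inl rfl⟩, map_E12 _ z⟩
    · exact ⟨E21 z, Subgroup.subset_closure ⟨z, .inr rfl⟩, map_E21 _ z⟩
  obtain ⟨x, hx, hxg⟩ := hE2 hg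
  suffices h : Matrix.SpecialLinearGroup.map (algebraMap R (Localization.Away (f : R))) g = x by
    rw [h]; exact hx
  ext a b
  apply hj
  have := congrArg (fun M : SL2 F => M a b) hxg
  simpa using this.symm

/-- Let `R₀` be a finitely generated integral domain with infinitely many
pairwise non-associate prime elements, `R = R₀[s,t]` and `F` the field of fractions of `R`.
Then for every finitely generated `R`-subalgebra `S` of `F`, `SL₂(R)` is not contained
in `E₂(S)`. -/
theorem statement1 (R₀ : Type*) [CommRing R₀] [IsDomain R₀] [Algebra.FiniteType ℤ R₀]
    (hprimes : ∃ P : Set R₀, P.Infinite ∧ (∀ p ∈ P, Prime p) ∧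
      P.Pairwise fun p q => ¬ Associated p q)
    (S : Subalgebra (MvPolynomial (Fin 2) R₀) (FractionRing (MvPolynomial (Fin 2) R₀)))
    (hS : S.FG) :
    ¬ ((Matrix.SpecialLinearGroup.map
        (algebraMap (MvPolynomial (Fin 2) R₀)
          (FractionRing (MvPolynomial (Fin 2) R₀)))).range ≤ E2 S.toSubring) := by
  intro hcontra
  obtain ⟨f, hf, hfE⟩ := exists_denominator S hS
  obtain ⟨N, m, hm, hmax⟩ := exists_weight f hf
  have : IsNoetherianRing R₀ := Algebra.FiniteType.isNoetherianRing ℤ R₀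
  obtain ⟨P, hPinf, hPprime, hPpair⟩ := hprimes
  obtain ⟨p, hpP, hpm⟩ := exists_prime_not_dvd _ hm P hPinf hPprime hPpair
  have hp := hPprime p hpP
  have hI : (Ideal.span {p}).IsPrime := (Ideal.span_singleton_prime hp.ne_zero).2 hp
  let O := Localization.AtPrime (Ideal.span {p})
  have hmaxI : IsLocalRing.maximalIdeal O = Ideal.span {algebraMap R₀ O p} := by
    rw [← Localization.AtPrime.map_eq_maximalIdeal, Ideal.map_span, Set.image_singleton]
  have hpO0 : algebraMap R₀ O p ≠ 0 := by
    rw [Ne, FaithfulSMul.algebraMap_eq_zero_iff]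
    exact hp.ne_zero
  have hpO : Prime (algebraMap R₀ O p) := by
    rw [← Ideal.span_singleton_prime hpO0, ← hmaxI]
    infer_instance
  have hmO : IsUnit (algebraMap R₀ O (f.coeff m)) :=
    IsLocalization.map_units O (⟨f.coeff m, fun h => hpm (Ideal.mem_span_singleton.1 h)⟩ :
      (Ideal.span {p}).primeCompl)
  let π : MvPowerSeries (Fin 2) O := MvPowerSeries.C (algebraMap R₀ O p)
  let B := Localization.Away π
  let ι : MvPowerSeries (Fin 2) O →+* B := algebraMap _ B
  have hq := IsLocalization.Away.mul_invSelf (S := B) π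
  set q : B := IsLocalization.Away.invSelf π
  -- The substitution `s ↦ (1 + s) / p ^ N`, `t ↦ (1 + t) / p`.
  let σ : MvPolynomial (Fin 2) R₀ →+* B :=
    MvPolynomial.eval₂Hom (ι.comp (MvPowerSeries.C.comp (algebraMap R₀ O)))
      ![q ^ N * ι (1 + MvPowerSeries.X 0), q * ι (1 + MvPowerSeries.X 1)]
  have hσC (r) : σ (MvPolynomial.C r) = ι (MvPowerSeries.C (algebraMap R₀ O r)) := by simp [σ]
  have hσ0 : σ (MvPolynomial.X 0) = q ^ N * ι (1 + MvPowerSeries.X 0) := by simp [σ]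
  have hσ1 : σ (MvPolynomial.X 1) = q * ι (1 + MvPowerSeries.X 1) := by simp [σ]
  have hσf : IsUnit (σ f) :=
    isUnit_subst ι σ p hpO.not_isUnit hq hσC N hσ0 hσ1 f m hmO hmax
  let φ : Localization.Away f →+* B := IsLocalization.Away.lift f hσf
  -- The preimages of the power series variables `s` and `t` under `σ`.
  let a : MvPolynomial (Fin 2) R₀ := MvPolynomial.C p ^ N * MvPolynomial.X 0 - 1
  let b : MvPolynomial (Fin 2) R₀ := MvPolynomial.C p * MvPolynomial.X 1 - 1
  have hσa : σ a = ι (MvPowerSeries.X 0) := by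
    have e : (ι π * q) ^ N = 1 := by rw [hq, one_pow]
    rw [mul_pow] at e
    simp only [a, map_sub, map_mul, map_pow, hσC, hσ0, map_one, map_add]
    linear_combination (1 + ι (MvPowerSeries.X 0)) * e
  have hσb : σ b = ι (MvPowerSeries.X 1) := by
    simp only [b, map_sub, map_mul, hσC, hσ1, map_one, map_add]
    linear_combination (1 + ι (MvPowerSeries.X 1)) * hq
  have hmem := Elem.map_le φ (hfE (cohn (MvPolynomial.X 1) a b) (hcontra ⟨_, rfl⟩))
  rw [map_cohn, map_cohn] at hmem
  simp only [φ, IsLocalization.Away.lift_eq] at hmem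
  rw [hσa, hσb, hσ1] at hmem
  exact cohn_notMem hpO hq hmem
end
end

section
/- Let R be an integral domain with field of fractions F and let π ∈ R be a prime element satisfying ⋂_{n≥0} πⁿR = {0}. If R/πR is not a Bezout domain, or if the canonical ring homomorphism R → R/πR does not induce a surjective group homomorphism SL₂(R) → SL₂(R/πR), then SL₂(R[1/π]) ≠ E₂(R[1/π]), where R[1/π] denotes the subring of F generated by R and 1/π. -/
/-!
Put `A = R[1/π]`, `Γ = SL₂(R)`, and let `Γ'` be the conjugate of `Γ` by `diag(1/π, 1)`, i.e. the
matrices `[[a, b/π], [πc, d]]`. The group `E₂(A)` lies in the group generated by `Γ` and `Γ'`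
(`E2_le`), so each of its elements is a reduced word, alternating between letters of `Γ \ Γ'` and
`Γ' \ Γ` (`exists_red`).

These two sets of letters play ping-pong on vectors of `F²`: up to scaling, a primitive vector either
reduces to the point `(1 : 0)` modulo `π` (`AttrVec`) or it does not (`RepVec`); letters of `Γ \ Γ'` send
the first kind to the second, and letters of `Γ' \ Γ` the second to the first. Geometrically this is
the action on the ends of the tree of `SL₂` at `π`.

Suppose `SL₂(A) = E₂(A)`. For `a, b ∈ R` not divisible by `π`, the transvection
`M = 1 + π⁻¹ (a, b)ᵗ (-b, a)` lies in `SL₂(A)`, and both of its columns reduce to the point `(a : b)`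
modulo `π`. Ping-pong applied to a reduced word for `M` shows that `(a : b)` is the image of
`(1 : 0)` under the first letter of the word if that letter is in `Γ`, and is `(1 : 0)` otherwise.
Hence every pair `(a, b)` modulo `π` is proportional to the first column of the reduction of a matrix in
`SL₂(R)` (`exists_row`). This makes every ideal with two generators in
`R/πR` principal, and reduces the lifting of matrices from `SL₂(R/πR)` to `SL₂(R)` to the case of
upper triangular matrices, which are products of elementary ones.
-/

open Matrix Pointwise

noncomputable section

/-! ### Reduced words in two subgroups -/

/-- Reduced alternating words in the subgroups `H` and `K`, the last letter being an arbitrary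
element of `H`. The flag is `true` when the first letter is in `K \ H`, and `false` when the word is
a single element of `H` or starts with a letter in `H \ K`. -/
inductive Red_s2 {G : Type*} [Group G] (H K : Subgroup G) : Bool → G → Prop
  | base {h : G} : h ∈ H → Red_s2 H K false h
  | stepH {h p : G} : h ∈ H → h ∉ K → Red_s2 H K true p → Red_s2 H K false (h * p)
  | stepK {k q : G} : k ∈ K → k ∉ H → Red_s2 H K false q → Red_s2 H K true (k * q)

lemma Red_s2.inter_mul {G : Type*} [Group G] {H K : Subgroup G} {b : Bool} {g d : G}
    (hg : Red_s2 H K b g) (hH : d ∈ H) (hK : d ∈ K) : Red_s2 H K b (d * g) := by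
  cases hg with
  | base h => exact .base (H.mul_mem hH h)
  | stepH h h' hp =>
    rw [← mul_assoc]
    exact .stepH (H.mul_mem hH h) (fun hh => h' ((K.mul_mem_cancel_left hK).1 hh)) hp
  | stepK h h' hp =>
    rw [← mul_assoc]
    exact .stepK (K.mul_mem hK h) (fun hh => h' ((H.mul_mem_cancel_left hH).1 hh)) hp

lemma Red_s2.left_mul {G : Type*} [Group G] {H K : Subgroup G} {b : Bool} {g h : G}
    (hg : Red_s2 H K b g) (hH : h ∈ H) : ∃ b, Red_s2 H K b (h * g) := by
  cases hg with
  | base h' => exact ⟨_, .base (H.mul_mem hH h')⟩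
  | @stepH h₁ p h₁H h₁K hp =>
    rw [← mul_assoc]
    by_cases hk : h * h₁ ∈ K
    · exact ⟨_, hp.inter_mul (H.mul_mem hH h₁H) hk⟩
    · exact ⟨_, .stepH (H.mul_mem hH h₁H) hk hp⟩
  | stepK k₁ k₂ hq =>
    by_cases hk : h ∈ K
    · exact ⟨_, (Red_s2.stepK k₁ k₂ hq).inter_mul hH hk⟩
    · exact ⟨_, .stepH hH hk (.stepK k₁ k₂ hq)⟩

lemma Red_s2.right_mul {G : Type*} [Group G] {H K : Subgroup G} {b : Bool} {g k : G}
    (hg : Red_s2 H K b g) (hK : k ∈ K) : ∃ b, Red_s2 H K b (k * g) := by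
  by_cases hk : k ∈ H
  · exact ⟨_, hg.inter_mul hk hK⟩
  cases hg with
  | base h' => exact ⟨_, .stepK hK hk (.base h')⟩
  | stepH h₁ h₂ hp => exact ⟨_, .stepK hK hk (.stepH h₁ h₂ hp)⟩
  | @stepK k₁ q k₁K k₁H hq =>
    rw [← mul_assoc]
    by_cases hh : k * k₁ ∈ H
    · exact ⟨_, hq.inter_mul hh (K.mul_mem hK k₁K)⟩
    · exact ⟨_, .stepK (K.mul_mem hK k₁K) hh hq⟩

lemma exists_red {G : Type*} [Group G] {H K : Subgroup G} {g : G} (hg : g ∈ H ⊔ K) :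
    ∃ b, Red_s2 H K b g := by
  rw [Subgroup.sup_eq_closure] at hg
  induction hg using Subgroup.closure_induction_left with
  | one => exact ⟨_, .base H.one_mem⟩
  | mul_left x hx y _ ih =>
    obtain ⟨b, hb⟩ := ih
    rcases hx with hx | hx
    · exact hb.left_mul hx
    · exact hb.right_mul hx
  | inv_mul_cancel x hx y _ ih =>
    obtain ⟨b, hb⟩ := ih
    rcases hx with hx | hx
    · exact hb.left_mul (H.inv_mem hx)
    · exact hb.right_mul (K.inv_mem hx)

/-! ### The two subgroups and the ping-pong -/

section PingPong

variable {R : Type*} [CommRing R] {F : Type*} [Field F] [Algebra R F]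

/-- The group `Γ`: the image of `SL₂(R)` in `SL₂(F)`. -/
def gam (R : Type*) [CommRing R] (F : Type*) [Field F] [Algebra R F] : Subgroup (SL2 F) :=
  (Matrix.SpecialLinearGroup.map (n := Fin 2) (algebraMap R F)).range

/-- The group `Γ'` of matrices `[[a, b/π], [πc, d]]` with `[[a, b], [c, d]] ∈ SL₂(R)`, described
without division as `[[a, y], [πc, d]]` with `πy = b`. -/
def gam' (F : Type*) [Field F] [Algebra R F] (π : R) : Subgroup (SL2 F) where
  carrier := {g | ∃ a b c d : R, g 0 0 = algebraMap R F a ∧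
    algebraMap R F π * g 0 1 = algebraMap R F b ∧ g 1 0 = algebraMap R F π * algebraMap R F c ∧
    g 1 1 = algebraMap R F d}
  one_mem' := ⟨1, 0, 0, 1, by simp⟩
  mul_mem' := by
    rintro x y ⟨a, b, c, d, h1, h2, h3, h4⟩ ⟨a', b', c', d', h1', h2', h3', h4'⟩
    refine ⟨a * a' + b * c', a * b' + b * d', c * a' + d * c', c * b' + d * d', ?_, ?_, ?_, ?_⟩ <;>
    simp only [Matrix.SpecialLinearGroup.coe_mul, Matrix.mul_apply, Fin.sum_univ_two, map_add,
      map_mul, ← h2, ← h2', h1, h3, h4, h1', h3', h4'] <;> ring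
  inv_mem' := by
    rintro x ⟨a, b, c, d, h1, h2, h3, h4⟩
    refine ⟨d, -b, -c, a, ?_, ?_, ?_, ?_⟩ <;>
    simp [Matrix.SpecialLinearGroup.coe_inv, Matrix.adjugate_fin_two, h1, ← h2, h3, h4]

/-- The element of `SL₂` with the given entries. -/
def mk2 {A : Type*} [CommRing A] (a b c d : A) (h : a * d - b * c = 1) : SL2 A :=
  ⟨!![a, b; c, d], by rw [Matrix.det_fin_two_of, h]⟩

lemma coe_mk2 {A : Type*} [CommRing A] (a b c d : A) (h : a * d - b * c = 1) :
    (mk2 a b c d h : Matrix (Fin 2) (Fin 2) A) = !![a, b; c, d] := rfl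

lemma coe_E12 {A : Type*} [CommRing A] (r : A) :
    (E12 r : Matrix (Fin 2) (Fin 2) A) = !![1, r; 0, 1] := rfl

lemma coe_E21 {A : Type*} [CommRing A] (r : A) :
    (E21 r : Matrix (Fin 2) (Fin 2) A) = !![1, 0; r, 1] := rfl

lemma mem_gam_of {g : SL2 F} (hinj : Function.Injective (algebraMap R F)) {a b c d : R}
    (h1 : g 0 0 = algebraMap R F a) (h2 : g 0 1 = algebraMap R F b)
    (h3 : g 1 0 = algebraMap R F c) (h4 : g 1 1 = algebraMap R F d) : g ∈ gam R F := by
  have hdet : a * d - b * c = 1 := by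
    apply hinj
    have := g.det_coe
    rw [Matrix.det_fin_two, h1, h2, h3, h4] at this
    simpa using this
  refine ⟨mk2 a b c d hdet, ?_⟩
  ext i j
  fin_cases i <;> fin_cases j <;> simp [h1, h2, h3, h4, coe_mk2]

/-- Up to a nonzero scalar of `F`, the vector `(x, y)` is integral and reduces modulo `π` to a
nonzero multiple of `(1, 0)`. -/
def AttrVec (π : R) (x y : F) : Prop :=
  ∃ (s : F) (u v : R), s ≠ 0 ∧ ¬ π ∣ u ∧ x = s * algebraMap R F u ∧
    y = s * (algebraMap R F π * algebraMap R F v)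

/-- Up to a nonzero scalar of `F`, the vector `(x, y)` is integral and its reduction modulo `π` has
nonzero second coordinate. -/
def RepVec (π : R) (x y : F) : Prop :=
  ∃ (s : F) (u v : R), s ≠ 0 ∧ ¬ π ∣ v ∧ x = s * algebraMap R F u ∧ y = s * algebraMap R F v

/-- Only one of the two columns is followed through the word: which one is decided by the last
letter, an element of `Γ` whose bottom row is not divisible by `π`. -/
lemma Red_s2.pingpong {π : R} (hπ : Prime π) (hinj : Function.Injective (algebraMap R F))
    (h0 : algebraMap R F π ≠ 0) {b : Bool} {g : SL2 F}
    (hg : Red_s2 (gam R F) (gam' F π) b g) :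
    ∃ j, if b then AttrVec π (g 0 j) (g 1 j) else RepVec π (g 0 j) (g 1 j) := by
  induction hg with
  | base h =>
    obtain ⟨γ, rfl⟩ := h
    have hdet := γ.det_coe
    rw [Matrix.det_fin_two] at hdet
    by_cases hc : π ∣ γ 1 0
    · have hd : ¬ π ∣ γ 1 1 := fun hd => hπ.not_isUnit <| isUnit_of_dvd_one <| by
        rw [← hdet]
        exact dvd_sub (hd.mul_left _) (hc.mul_left _)
      exact ⟨1, by simpa using ⟨1, γ 0 1, γ 1 1, one_ne_zero, hd, by simp, by simp⟩⟩
    · exact ⟨0, by simpa using ⟨1, γ 0 0, γ 1 0, one_ne_zero, hc, by simp, by simp⟩⟩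
  | @stepH h p hH hK _ ih =>
    obtain ⟨γ, rfl⟩ := hH
    have hc : ¬ π ∣ γ 1 0 := by
      rintro ⟨c, hc⟩
      exact hK ⟨γ 0 0, π * γ 0 1, c, γ 1 1, by simp, by simp, by simp [hc], by simp⟩
    obtain ⟨j, hj⟩ := ih
    obtain ⟨s, u, v, hs, hu, hx, hy⟩ := by simpa using hj
    refine ⟨j, ?_⟩
    simp only [Bool.false_eq_true, if_false]
    refine ⟨s, γ 0 0 * u + γ 0 1 * (π * v), γ 1 0 * u + π * (γ 1 1 * v), hs, ?_, ?_, ?_⟩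
    · intro hd
      exact (hπ.dvd_or_dvd ((dvd_add_left (dvd_mul_right _ _)).1 hd)).elim hc hu
    · simp [Matrix.mul_apply, Fin.sum_univ_two, hx, hy]; ring
    · simp [Matrix.mul_apply, Fin.sum_univ_two, hx, hy]; ring
  | @stepK k q hK hH _ ih =>
    obtain ⟨a, b, c, d, h1, h2, h3, h4⟩ := hK
    have hb : ¬ π ∣ b := by
      rintro ⟨b, rfl⟩
      refine hH (mem_gam_of hinj h1 (b := b) ?_ (c := π * c) (by rw [h3, map_mul]) h4)
      apply mul_left_cancel₀ h0
      rw [h2, map_mul]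
    obtain ⟨j, hj⟩ := ih
    obtain ⟨s, u, v, hs, hv, hx, hy⟩ := by simpa using hj
    refine ⟨j, ?_⟩
    simp only [if_true]
    have h2' : k 0 1 = (algebraMap R F π)⁻¹ * algebraMap R F b := by
      rw [← h2]; field_simp
    refine ⟨s * (algebraMap R F π)⁻¹, b * v + π * (a * u), π * (c * u) + d * v,
      mul_ne_zero hs (inv_ne_zero h0), ?_, ?_, ?_⟩
    · intro hd
      exact (hπ.dvd_or_dvd ((dvd_add_left (dvd_mul_right _ _)).1 hd)).elim hb hv
    · simp [Matrix.mul_apply, Fin.sum_univ_two, hx, hy, h1, h2']; field_simp; ring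
    · simp [Matrix.mul_apply, Fin.sum_univ_two, hx, hy, h3, h4]; field_simp

/-! ### Elementary matrices over `R[1/π]` -/

lemma exists_pow_mul {π : R} (h0 : algebraMap R F π ≠ 0) {x : F}
    (hx : x ∈ Subring.closure (Set.range (algebraMap R F) ∪ {(algebraMap R F π)⁻¹})) :
    ∃ (n : ℕ) (r : R), x * algebraMap R F π ^ n = algebraMap R F r := by
  induction hx using Subring.closure_induction with
  | mem x hx =>
    rcases hx with ⟨r, rfl⟩ | hx
    · exact ⟨0, r, by simp⟩
    · rw [Set.mem_singleton_iff] at hx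
      subst hx
      exact ⟨1, 1, by simp [h0]⟩
  | zero => exact ⟨0, 0, by simp⟩
  | one => exact ⟨0, 1, by simp⟩
  | add x y _ _ hx hy =>
    obtain ⟨n, r, h⟩ := hx
    obtain ⟨m, t, h'⟩ := hy
    refine ⟨n + m, r * π ^ m + t * π ^ n, ?_⟩
    simp only [map_add, map_mul, map_pow, ← h, ← h']; ring
  | neg x _ hx =>
    obtain ⟨n, r, h⟩ := hx
    exact ⟨n, -r, by simp [h]⟩
  | mul x y _ _ hx hy =>
    obtain ⟨n, r, h⟩ := hx
    obtain ⟨m, t, h'⟩ := hy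
    refine ⟨n + m, r * t, ?_⟩
    simp only [map_mul, ← h, ← h']; ring

/-- The Weyl element `[[0, x], [-x⁻¹, 0]]`. -/
def weyl (x : F) (hx : x ≠ 0) : SL2 F :=
  mk2 0 x (-x⁻¹) 0 (by simp [hx])

lemma coe_weyl (x : F) (hx : x ≠ 0) :
    (weyl x hx : Matrix (Fin 2) (Fin 2) F) = !![0, x; -x⁻¹, 0] := rfl

/-- The product of the Weyl elements `weyl π⁻¹ ∈ Γ'` and `weyl 1 ∈ Γ` is diagonal, and conjugation by
it divides the entry of `E₁₂` by `π²`; this produces arbitrary denominators. -/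
lemma E2_le {π : R} (hinj : Function.Injective (algebraMap R F)) (h0 : algebraMap R F π ≠ 0) :
    E2 (Subring.closure (Set.range (algebraMap R F) ∪ {(algebraMap R F π)⁻¹})) ≤
      gam R F ⊔ gam' F π := by
  have hw : weyl (1 : F) one_ne_zero ∈ gam R F ⊔ gam' F π :=
    Subgroup.mem_sup_left (mem_gam_of hinj (a := 0) (b := 1) (c := -1) (d := 0)
      (by simp [coe_weyl]) (by simp [coe_weyl]) (by simp [coe_weyl]) (by simp [coe_weyl]))
  have hw' : weyl (algebraMap R F π)⁻¹ (inv_ne_zero h0) ∈ gam R F ⊔ gam' F π :=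
    Subgroup.mem_sup_right ⟨0, 1, -1, 0, by simp [coe_weyl, h0]⟩
  have key : ∀ (n : ℕ) (x : F) (r : R), x * algebraMap R F π ^ (2 * n) = algebraMap R F r →
      E12 x ∈ gam R F ⊔ gam' F π := by
    intro n
    induction n with
    | zero =>
      intro x r hx
      exact Subgroup.mem_sup_left (mem_gam_of hinj (a := 1) (b := r) (c := 0) (d := 1)
        (by simp [coe_E12]) (by simpa [coe_E12] using hx) (by simp [coe_E12]) (by simp [coe_E12]))
    | succ n ih =>
      intro x r hx
      have h1 := ih (x * algebraMap R F π ^ 2) r (by rw [← hx]; ring)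
      have hd := mul_mem hw' hw
      have : E12 x = weyl (algebraMap R F π)⁻¹ (inv_ne_zero h0) * weyl 1 one_ne_zero *
          E12 (x * algebraMap R F π ^ 2) *
          (weyl (algebraMap R F π)⁻¹ (inv_ne_zero h0) * weyl 1 one_ne_zero)⁻¹ := by
        rw [eq_mul_inv_iff_mul_eq]
        ext i j
        fin_cases i <;> fin_cases j <;>
          simp [coe_E12, coe_weyl, Matrix.mul_apply, Fin.sum_univ_two] <;> field_simp
        rw [Algebra.smul_def]
      rw [this]
      exact mul_mem (mul_mem hd h1) (inv_mem hd)
  have key' : ∀ x ∈ Subring.closure (Set.range (algebraMap R F) ∪ {(algebraMap R F π)⁻¹}),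
      E12 x ∈ gam R F ⊔ gam' F π := by
    intro x hx
    obtain ⟨n, r, h⟩ := exists_pow_mul h0 hx
    exact key n x (r * π ^ n) (by rw [map_mul, map_pow, ← h]; ring)
  refine (Subgroup.closure_le _).2 ?_
  rintro g ⟨r, hr, rfl | rfl⟩
  · exact key' r hr
  · have : E21 r = weyl 1 one_ne_zero * E12 (-r) * (weyl 1 one_ne_zero)⁻¹ := by
      rw [eq_mul_inv_iff_mul_eq]
      ext i j
      fin_cases i <;> fin_cases j <;>
        simp [coe_E12, coe_E21, coe_weyl, Matrix.mul_apply, Fin.sum_univ_two]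
    rw [this]
    exact mul_mem (mul_mem hw (key' _ (neg_mem hr))) (inv_mem hw)

/-! ### Transitivity modulo `π` -/

/-- The transvection `1 + π⁻¹ (a, b)ᵗ (-b, a)`, with `p` standing for `π`. -/
def transv (p a b : F) : SL2 F :=
  mk2 (1 - a * b * p⁻¹) (a ^ 2 * p⁻¹) (-b ^ 2 * p⁻¹) (1 + a * b * p⁻¹) (by ring)

lemma coe_transv (p a b : F) : (transv p a b : Matrix (Fin 2) (Fin 2) F) =
    !![1 - a * b * p⁻¹, a ^ 2 * p⁻¹; -b ^ 2 * p⁻¹, 1 + a * b * p⁻¹] := rfl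

lemma transv_mem {S : Subring F} {p a b : F} (hp : p⁻¹ ∈ S) (ha : a ∈ S) (hb : b ∈ S) :
    transv p a b ∈ SL2In S := by
  let pS : S := ⟨_, hp⟩
  let aS : S := ⟨_, ha⟩
  let bS : S := ⟨_, hb⟩
  refine ⟨mk2 (1 - aS * bS * pS) (aS ^ 2 * pS) (-bS ^ 2 * pS) (1 + aS * bS * pS) (by ring), ?_⟩
  ext i j
  fin_cases i <;> fin_cases j <;> simp [coe_transv, coe_mk2, aS, bS, pS]

/-- If a column of `transv π a b` lies in the `γ⁻¹`-translate of `AttrVec`, then `γ` moves the point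
`(a : b)` modulo `π` to `(1 : 0)`. -/
lemma dvd_of_attr {π : R} (hπ : Prime π) (hinj : Function.Injective (algebraMap R F))
    (h0 : algebraMap R F π ≠ 0) {a b : R} (ha : ¬ π ∣ a) (hb : ¬ π ∣ b) (γ : SL2 R) {p : SL2 F}
    {j : Fin 2} (hj : AttrVec π (p 0 j) (p 1 j))
    (h : Matrix.SpecialLinearGroup.map (algebraMap R F) γ *
      transv (algebraMap R F π) (algebraMap R F a) (algebraMap R F b) = p) :
    π ∣ γ 1 0 * a + γ 1 1 * b := by
  obtain ⟨s, u, v, hs, hu, hx, hy⟩ := hj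
  subst h
  -- Eliminating the scalar `s` from the two coordinates `(x, y)` of the column gives `y u = x π v`.
  fin_cases j
  · have e : (γ 1 0 * (π - a * b) + γ 1 1 * (-b ^ 2)) * u =
        (γ 0 0 * (π - a * b) + γ 0 1 * (-b ^ 2)) * (π * v) := by
      apply hinj
      simp [coe_transv, Matrix.mul_apply, Fin.sum_univ_two] at hx hy ⊢
      field_simp at hx hy
      linear_combination algebraMap R F u * hy - algebraMap R F π * algebraMap R F v * hx
    have h1 : π ∣ (γ 1 0 * (π - a * b) + γ 1 1 * (-b ^ 2)) :=
      (hπ.dvd_or_dvd (e ▸ (dvd_mul_right π v).mul_left _)).resolve_right hu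
    have h2 : π ∣ (γ 1 0 * a + γ 1 1 * b) * b := by
      have := dvd_sub (dvd_mul_right π (γ 1 0)) h1
      ring_nf at this ⊢
      exact this
    exact (hπ.dvd_or_dvd h2).resolve_right hb
  · have e : (γ 1 0 * a ^ 2 + γ 1 1 * (π + a * b)) * u =
        (γ 0 0 * a ^ 2 + γ 0 1 * (π + a * b)) * (π * v) := by
      apply hinj
      simp [coe_transv, Matrix.mul_apply, Fin.sum_univ_two] at hx hy ⊢
      field_simp at hx hy
      linear_combination algebraMap R F u * hy - algebraMap R F π * algebraMap R F v * hx
    have h1 : π ∣ (γ 1 0 * a ^ 2 + γ 1 1 * (π + a * b)) :=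
      (hπ.dvd_or_dvd (e ▸ (dvd_mul_right π v).mul_left _)).resolve_right hu
    have h2 : π ∣ (γ 1 0 * a + γ 1 1 * b) * a := by
      have := dvd_sub h1 (dvd_mul_right π (γ 1 1))
      ring_nf at this ⊢
      exact this
    exact (hπ.dvd_or_dvd h2).resolve_right ha

/-- `SL₂(R)` acts transitively on the projective line over the fraction field of `R/πR`, stated in
integral coordinates: some `γ` moves `(a : b)` to `(1 : 0)` modulo `π`. -/
lemma exists_row {π : R} (hπ : Prime π) (hinj : Function.Injective (algebraMap R F))
    (h : SL2In (Subring.closure (Set.range (algebraMap R F) ∪ {(algebraMap R F π)⁻¹})) =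
      E2 (Subring.closure (Set.range (algebraMap R F) ∪ {(algebraMap R F π)⁻¹}))) (a b : R) :
    ∃ γ : SL2 R, π ∣ γ 1 0 * a + γ 1 1 * b := by
  have h0 : algebraMap R F π ≠ 0 := by
    rw [Ne, ← map_zero (algebraMap R F)]
    exact fun e => hπ.ne_zero (hinj e)
  by_cases hb : π ∣ b
  · exact ⟨1, by simpa using hb⟩
  by_cases ha : π ∣ a
  · exact ⟨mk2 0 (-1) 1 0 (by ring), by simpa [coe_mk2] using ha⟩
  have hM : transv (algebraMap R F π) (algebraMap R F a) (algebraMap R F b) ∈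
      SL2In (Subring.closure (Set.range (algebraMap R F) ∪ {(algebraMap R F π)⁻¹})) :=
    transv_mem (Subring.subset_closure (Or.inr rfl)) (Subring.subset_closure (Or.inl ⟨a, rfl⟩))
      (Subring.subset_closure (Or.inl ⟨b, rfl⟩))
  rw [h] at hM
  obtain ⟨f, hf⟩ := exists_red (E2_le hinj h0 hM)
  generalize hg : transv (algebraMap R F π) (algebraMap R F a) (algebraMap R F b) = g at hf
  cases hf with
  | base hh =>
    -- The upper right entry `a² / π` is not in `R`.
    exfalso
    obtain ⟨γ, rfl⟩ := hh
    have := congrArg (fun m : SL2 F => m 0 1) hg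
    simp [coe_transv] at this
    field_simp at this
    rw [← map_pow, ← map_mul] at this
    exact ha (hπ.dvd_of_dvd_pow ⟨_, hinj this⟩)
  | @stepH h₁ p hH hK hp =>
    obtain ⟨γ, rfl⟩ := hH
    obtain ⟨j, hj⟩ := hp.pingpong hπ hinj h0
    refine ⟨γ⁻¹, dvd_of_attr hπ hinj h0 ha hb γ⁻¹ (p := p) (by simpa using hj) ?_⟩
    rw [hg, map_inv, inv_mul_cancel_left]
  | @stepK k q h1 h2 h3 =>
    obtain ⟨j, hj⟩ := (Red_s2.stepK h1 h2 h3).pingpong hπ hinj h0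
    refine ⟨1, dvd_of_attr hπ hinj h0 ha hb 1 (p := k * q) (by simpa using hj) ?_⟩
    rw [hg, map_one, one_mul]

end PingPong

/-! ### Consequences for `R/πR` -/

lemma isBezout_quotient {R : Type*} [CommRing R] {π : R}
    (h : ∀ a b : R, ∃ γ : SL2 R, π ∣ γ 1 0 * a + γ 1 1 * b) :
    IsBezout (R ⧸ Ideal.span {π}) := by
  rw [IsBezout.iff_span_pair_isPrincipal]
  intro x y
  obtain ⟨a, rfl⟩ := Ideal.Quotient.mk_surjective x
  obtain ⟨b, rfl⟩ := Ideal.Quotient.mk_surjective y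
  obtain ⟨γ, hγ⟩ := h a b
  have hdet := congrArg (Ideal.Quotient.mk (Ideal.span {π})) γ.det_coe
  rw [← Ideal.mem_span_singleton, ← Ideal.Quotient.eq_zero_iff_mem] at hγ
  rw [Matrix.det_fin_two] at hdet
  simp only [map_add, map_mul, map_sub, map_one] at hγ hdet
  -- With `γ (a, b)ᵗ = (t, 0)ᵗ` modulo `π`, both `a` and `b` are multiples of `t`.
  refine ⟨⟨Ideal.Quotient.mk _ (γ 0 0 * a + γ 0 1 * b), le_antisymm ?_ ?_⟩⟩
  · rw [Ideal.span_le]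
    rintro z (rfl | hz)
    · refine Ideal.mem_span_singleton'.2 ⟨Ideal.Quotient.mk _ (γ 1 1), ?_⟩
      simp only [map_add, map_mul]
      linear_combination (Ideal.Quotient.mk (Ideal.span {π}) a) * hdet +
        (Ideal.Quotient.mk (Ideal.span {π}) (γ 0 1)) * hγ
    · rw [Set.mem_singleton_iff] at hz
      subst hz
      refine Ideal.mem_span_singleton'.2 ⟨-Ideal.Quotient.mk _ (γ 1 0), ?_⟩
      simp only [map_add, map_mul]
      linear_combination (Ideal.Quotient.mk (Ideal.span {π}) b) * hdet -
        (Ideal.Quotient.mk (Ideal.span {π}) (γ 0 0)) * hγ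
  · refine (Ideal.span_singleton_le_iff_mem _).2 (Ideal.mem_span_pair.2 ?_)
    exact ⟨Ideal.Quotient.mk _ (γ 0 0), Ideal.Quotient.mk _ (γ 0 1), by simp⟩

/-- Any upper triangular matrix in `SL₂` is a product of elementary matrices. -/
lemma upper_eq {A : Type*} [CommRing A] (g : SL2 A) (hg : g 1 0 = 0) :
    g = E12 (g 0 0) * E21 (-g 1 1) * E12 (g 0 0) * (E12 (-1) * E21 1 * E12 (-1)) *
      E12 (g 1 1 * g 0 1) := by
  have hdet := g.det_coe
  rw [Matrix.det_fin_two, hg] at hdet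
  ext i j
  fin_cases i <;> fin_cases j <;>
    simp [coe_E12, coe_E21, Matrix.mul_apply, Fin.sum_univ_two, hg]
  · grind
  · grind
  · grind
  · grind

lemma surjective_map {R : Type*} [CommRing R] {π : R}
    (h : ∀ a b : R, ∃ γ : SL2 R, π ∣ γ 1 0 * a + γ 1 1 * b) :
    Function.Surjective (Matrix.SpecialLinearGroup.map (n := Fin 2)
      (Ideal.Quotient.mk (Ideal.span {π}))) := by
  set f := Matrix.SpecialLinearGroup.map (n := Fin 2) (Ideal.Quotient.mk (Ideal.span {π})) with hf
  have h12 : ∀ x, E12 x ∈ f.range := by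
    intro x
    obtain ⟨a, rfl⟩ := Ideal.Quotient.mk_surjective x
    refine ⟨E12 a, ?_⟩
    ext i j
    fin_cases i <;> fin_cases j <;> simp [hf, coe_E12]
  have h21 : ∀ x, E21 x ∈ f.range := by
    intro x
    obtain ⟨a, rfl⟩ := Ideal.Quotient.mk_surjective x
    refine ⟨E21 a, ?_⟩
    ext i j
    fin_cases i <;> fin_cases j <;> simp [hf, coe_E21]
  intro g
  obtain ⟨a, ha⟩ := Ideal.Quotient.mk_surjective (g 0 0)
  obtain ⟨b, hb⟩ := Ideal.Quotient.mk_surjective (g 1 0)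
  obtain ⟨γ, hγ⟩ := h a b
  rw [← Ideal.mem_span_singleton, ← Ideal.Quotient.eq_zero_iff_mem] at hγ
  have hz : (f γ * g) 1 0 = 0 := by
    simpa [hf, Matrix.mul_apply, Fin.sum_univ_two, ← ha, ← hb] using hγ
  have hm : f γ * g ∈ f.range := by
    rw [upper_eq _ hz]
    exact mul_mem (mul_mem (mul_mem (mul_mem (h12 _) (h21 _)) (h12 _))
      (mul_mem (mul_mem (h12 _) (h21 _)) (h12 _))) (h12 _)
  exact (f.range.mul_mem_cancel_left ⟨γ, rfl⟩).1 hm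

/-- If `R` is an integral domain with field of fractions `F` and `π ∈ R`
a prime element with `⋂ₙ πⁿR = {0}`, and if `R/πR` is not a Bezout domain or the canonical
homomorphism `SL₂(R) → SL₂(R/πR)` is not surjective, then `SL₂(R[1/π]) ≠ E₂(R[1/π])`. -/
theorem statement2 (R : Type*) [CommRing R] [IsDomain R]
    (F : Type*) [Field F] [Algebra R F] [IsFractionRing R F]
    (π : R) (hπ : Prime π)
    (hA : (⋂ n : ℕ, ((Ideal.span {π ^ n} : Ideal R) : Set R)) = {0})
    (h : ¬ (IsDomain (R ⧸ Ideal.span {π}) ∧ IsBezout (R ⧸ Ideal.span {π})) ∨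
      ¬ Function.Surjective
        (Matrix.SpecialLinearGroup.map (n := Fin 2)
          (Ideal.Quotient.mk (Ideal.span {π})))) :
    SL2In (Subring.closure (Set.range (algebraMap R F) ∪ {(algebraMap R F π)⁻¹})) ≠
      E2 (Subring.closure (Set.range (algebraMap R F) ∪ {(algebraMap R F π)⁻¹})) := by
  have hinj : Function.Injective (algebraMap R F) := IsFractionRing.injective R F
  intro heq
  have key := exists_row hπ hinj heq
  have hdom : IsDomain (R ⧸ Ideal.span {π}) :=
    (Ideal.Quotient.isDomain_iff_prime _).2 ((Ideal.span_singleton_prime hπ.ne_zero).2 hπ)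
  exact h.elim (fun h => h ⟨hdom, isBezout_quotient key⟩) (fun h => h (surjective_map key))
end
end

section
/- Let R be an integral domain with field of fractions F and let π ∈ R be a prime element satisfying ⋂_{n≥0} πⁿR = {0}; let R[1/π] be the subring of F generated by R and 1/π. Then the following are equivalent: (1) SL₂(R[1/π]) equals the subgroup of SL₂(F) generated by SL₂(R) ∪ D(1/π,1)·SL₂(R)·D(π,1); (2) R/πR is a Bezout domain and the canonical ring homomorphism R → R/πR induces a surjective group homomorphism SL₂(R) → SL₂(R/πR). -/
/-!
Write `Γ₀ = SL₂(R)` and `Γ₁ = D(1/π,1)·SL₂(R)·D(π,1)`, whose elements are the matrices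
`[[a, b/π], [πc, d]]`. Both sides of the equivalence amount to the transitivity of `SL₂(R)` on the
lines of `Frac(R/πR)²`: every `(a, b) ∈ R²` nonzero mod `π` is moved by some `δ ∈ SL₂(R)` to a
vector with second coordinate divisible by `π`.

From (2) to (1): if `π ∣ det N`, then `N` mod `π` has rank at most one, so the Bezout property and
the lifting of `SL₂(R/πR)` give `δ ∈ SL₂(R)` such that the bottom row of `δN` is divisible by `π`
(`exists_bottom`). Two such steps, one for `Γ₀` and one for `Γ₁`, lower by one the power of `π`
needed to clear the denominators of a matrix in `SL₂(R[1/π])` (`mem_of_denominator`).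

From (1) to (2): every element of `⟨Γ₀, Γ₁⟩` is in `Γ₀` or is `γw` with `γ ∈ Γ₀` and `w` a reduced
alternating word starting with an element of `Γ₁ \ Γ₀` (`normal_form`). Clearing denominators in
such a `w` leaves a matrix over `R` that is nonzero mod `π` with bottom row zero mod `π`
(`Reduced.denominator`). Applied to the transvection `I + π⁻¹ v v^⊥` with `v = (a, b)` and
`v^⊥ = (-b, a)`, this says that `γ⁻¹ v` has second coordinate divisible by `π`
(`exists_kill`). Bezout and surjectivity follow, since diagonal matrices of determinant one
always lift. In terms of the Bruhat-Tits tree of `SL₂(F)` at `π`, the transvection fixes the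
neighbour of the base vertex given by `v` and moves the base vertex itself, so that neighbour has
to lie in the `⟨Γ₀, Γ₁⟩`-orbit of the base edge.
-/

open Matrix Pointwise

noncomputable section

/-! ### Matrices and the two homomorphisms from `SL₂(R)` to `SL₂(F)` -/

section Aux

variable {R : Type*} [CommRing R] {F : Type*} [Field F] [Algebra R F]

/-- The inclusion `SL₂(R) → SL₂(F)`. -/
def inclHom (R F : Type*) [CommRing R] [Field F] [Algebra R F] : SL2 R →* SL2 F :=
  Matrix.SpecialLinearGroup.map (algebraMap R F)

/-- The matrix `[[a, b], [c, d]]` as an element of `SL₂(A)`. -/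
def mkSL2 {A : Type*} [CommRing A] (a b c d : A) (h : a * d - b * c = 1) : SL2 A :=
  ⟨!![a, b; c, d], by rw [Matrix.det_fin_two_of, h]⟩

section
variable {A : Type*} [CommRing A] (a b c d : A) (h : a * d - b * c = 1)

theorem mkSL2_00 : mkSL2 a b c d h 0 0 = a := rfl

theorem mkSL2_01 : mkSL2 a b c d h 0 1 = b := rfl

theorem mkSL2_10 : mkSL2 a b c d h 1 0 = c := rfl

theorem mkSL2_11 : mkSL2 a b c d h 1 1 = d := rfl

end

theorem SL2_ext {A : Type*} [CommRing A] {g h : SL2 A} (h00 : g 0 0 = h 0 0)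
    (h01 : g 0 1 = h 0 1) (h10 : g 1 0 = h 1 0) (h11 : g 1 1 = h 1 1) : g = h := by
  ext i j
  fin_cases i <;> fin_cases j <;> assumption

theorem SL2_det {A : Type*} [CommRing A] (g : SL2 A) :
    g 0 0 * g 1 1 - g 0 1 * g 1 0 = 1 := by
  have h1 := g.det_coe
  rwa [Matrix.det_fin_two] at h1

theorem SL2_mul {A : Type*} [CommRing A] (g h : SL2 A) (i j : Fin 2) :
    (g * h) i j = g i 0 * h 0 j + g i 1 * h 1 j := by
  rw [Matrix.SpecialLinearGroup.coe_mul, Matrix.mul_apply, Fin.sum_univ_two]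

/-- The homomorphism `h ↦ D(1/π,1)·h·D(π,1)` from `SL₂(R)` to `SL₂(F)`, with its value
`[[a, b/π], [πc, d]]` written out. -/
def conjHom (π : R) (hp : algebraMap R F π ≠ 0) : SL2 R →* SL2 F where
  toFun h := mkSL2 (algebraMap R F (h 0 0)) (algebraMap R F (h 0 1) * (algebraMap R F π)⁻¹)
      (algebraMap R F π * algebraMap R F (h 1 0)) (algebraMap R F (h 1 1)) (by
    have h2 := congrArg (algebraMap R F) (SL2_det h)
    simp only [map_sub, map_mul, map_one] at h2
    field_simp
    linear_combination h2)
  map_one' := by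
    apply SL2_ext <;> simp [mkSL2_00, mkSL2_01, mkSL2_10, mkSL2_11]
  map_mul' g h := by
    apply SL2_ext <;>
      simp only [mkSL2_00, mkSL2_01, mkSL2_10, mkSL2_11, SL2_mul, map_add, map_mul] <;>
      field_simp

theorem inclHom_apply (g : SL2 R) (i j : Fin 2) :
    inclHom R F g i j = algebraMap R F (g i j) := rfl

section
variable (π : R) (hp : algebraMap R F π ≠ 0) (h : SL2 R)

theorem conjHom_00 : conjHom π hp h 0 0 = algebraMap R F (h 0 0) := rfl

theorem conjHom_01 :
    conjHom π hp h 0 1 = algebraMap R F (h 0 1) * (algebraMap R F π)⁻¹ := rfl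

theorem conjHom_10 : conjHom π hp h 1 0 = algebraMap R F π * algebraMap R F (h 1 0) := rfl

theorem conjHom_11 : conjHom π hp h 1 1 = algebraMap R F (h 1 1) := rfl

end

theorem conjSet_eq (π : R) (hp : algebraMap R F π ≠ 0) :
    conjSet (algebraMap R F π) (Matrix.SpecialLinearGroup.map (algebraMap R F)).range =
      Set.range (conjHom (F := F) π hp) := by
  have key : ∀ k : SL2 R, ((conjHom (F := F) π hp k : SL2 F) : Matrix (Fin 2) (Fin 2) F) =
      !![(algebraMap R F π)⁻¹, 0; 0, 1] * (inclHom R F k : Matrix (Fin 2) (Fin 2) F) *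
        !![algebraMap R F π, 0; 0, 1] := by
    intro k
    rw [Matrix.eta_fin_two (inclHom R F k : Matrix (Fin 2) (Fin 2) F),
      Matrix.eta_fin_two (conjHom (F := F) π hp k : Matrix (Fin 2) (Fin 2) F)]
    simp only [conjHom_00, conjHom_01, conjHom_10, conjHom_11, inclHom_apply]
    rw [Matrix.mul_fin_two, Matrix.mul_fin_two]
    simp only [zero_mul, mul_zero, add_zero, zero_add, one_mul, mul_one]
    have e : (algebraMap R F π)⁻¹ * algebraMap R F (k 0 0) * algebraMap R F π =
        algebraMap R F (k 0 0) := by field_simp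
    rw [e, mul_comm (algebraMap R F (k 0 1)), mul_comm (algebraMap R F π)]
  ext g
  constructor
  · rintro ⟨_, ⟨k, rfl⟩, hg⟩
    exact ⟨k, Subtype.ext ((key k).trans hg.symm)⟩
  · rintro ⟨k, rfl⟩
    exact ⟨_, ⟨k, rfl⟩, key k⟩

theorem conjHom_eq_inclHom (π : R) (hp : algebraMap R F π ≠ 0) (h : SL2 R) (hd : π ∣ h 0 1) :
    ∃ g : SL2 R, conjHom (F := F) π hp h = inclHom R F g := by
  obtain ⟨b, hb⟩ := hd
  have hdet : h 0 0 * h 1 1 - b * (π * h 1 0) = 1 := by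
    linear_combination SL2_det h + h 1 0 * hb
  refine ⟨mkSL2 (h 0 0) b (π * h 1 0) (h 1 1) hdet, ?_⟩
  apply SL2_ext <;>
    simp only [conjHom_00, conjHom_01, conjHom_10, conjHom_11, inclHom_apply, mkSL2_00, mkSL2_01,
      mkSL2_10, mkSL2_11, map_mul, hb]
  field_simp

theorem inclHom_eq_conjHom (π : R) (hp : algebraMap R F π ≠ 0) (g : SL2 R) (hd : π ∣ g 1 0) :
    ∃ h : SL2 R, inclHom R F g = conjHom (F := F) π hp h := by
  obtain ⟨c, hc⟩ := hd
  have hdet : g 0 0 * g 1 1 - π * g 0 1 * c = 1 := by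
    linear_combination SL2_det g + g 0 1 * hc
  refine ⟨mkSL2 (g 0 0) (π * g 0 1) c (g 1 1) hdet, ?_⟩
  apply SL2_ext <;>
    simp only [conjHom_00, conjHom_01, conjHom_10, conjHom_11, inclHom_apply, mkSL2_00, mkSL2_01,
      mkSL2_10, mkSL2_11, map_mul, hc]
  field_simp

/-! ### Reduced words -/

/-- Nonempty reduced alternating words in `Γ₀ = SL₂(R)` and `Γ₁ = D(1/π,1)·SL₂(R)·D(π,1)` that
start with an element of `Γ₁ \ Γ₀`, with interior letters from `Γ₁ \ Γ₀` and `Γ₀ \ Γ₁` and an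
arbitrary last letter from `Γ₀`. Membership of `[[a, b/π], [πc, d]] ∈ Γ₁` in `Γ₀` is encoded as
`π ∣ b`, and membership of `[[p, q], [r, s]] ∈ Γ₀` in `Γ₁` as `π ∣ r`. -/
inductive Reduced (π : R) (hp : algebraMap R F π ≠ 0) : SL2 F → Prop
  | base (h g : SL2 R) (hh : ¬ π ∣ h 0 1) : Reduced π hp (conjHom π hp h * inclHom R F g)
  | step (h g : SL2 R) (w : SL2 F) (hh : ¬ π ∣ h 0 1) (hg : ¬ π ∣ g 1 0)
      (hw : Reduced π hp w) : Reduced π hp (conjHom π hp h * inclHom R F g * w)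

/-- `Γ₀` together with the products of an element of `Γ₀` and a reduced word. -/
def HasNormalForm (π : R) (hp : algebraMap R F π ≠ 0) (m : SL2 F) : Prop :=
  (∃ g : SL2 R, m = inclHom R F g) ∨
    ∃ (g : SL2 R) (w : SL2 F), Reduced π hp w ∧ m = inclHom R F g * w

theorem HasNormalForm.incl_mul {π : R} {hp : algebraMap R F π ≠ 0} {m : SL2 F}
    (hm : HasNormalForm π hp m)
    (k : SL2 R) : HasNormalForm π hp (inclHom R F k * m) := by
  rcases hm with ⟨g, rfl⟩ | ⟨g, w, hw, rfl⟩
  · exact Or.inl ⟨k * g, (map_mul _ _ _).symm⟩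
  · exact Or.inr ⟨k * g, w, hw, by rw [map_mul, mul_assoc]⟩

theorem HasNormalForm.conj_mul {π : R} {hp : algebraMap R F π ≠ 0} {m : SL2 F}
    (hm : HasNormalForm π hp m)
    (k : SL2 R) : HasNormalForm π hp (conjHom π hp k * m) := by
  by_cases hk : π ∣ k 0 1
  · obtain ⟨k', hk'⟩ := conjHom_eq_inclHom (F := F) π hp k hk
    rw [hk']
    exact hm.incl_mul k'
  have of_reduced : ∀ w, Reduced π hp w → HasNormalForm π hp w := fun w hw =>
    Or.inr ⟨1, w, hw, by rw [map_one, one_mul]⟩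
  rcases hm with ⟨g, rfl⟩ | ⟨g, w, hw, rfl⟩
  · exact of_reduced _ (.base k g hk)
  by_cases hg : π ∣ g 1 0
  -- if `g` lies in `Γ₁`, it is absorbed together with `k` into the first letter of `w`
  · obtain ⟨g', hg'⟩ := inclHom_eq_conjHom (F := F) π hp g hg
    rw [hg']
    cases hw with
    | base h e hh =>
      have e1 : conjHom π hp k * (conjHom π hp g' * (conjHom π hp h * inclHom R F e)) =
          conjHom π hp (k * g' * h) * inclHom R F e := by
        simp only [map_mul, mul_assoc]
      rw [e1]
      by_cases hd : π ∣ (k * g' * h) 0 1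
      · obtain ⟨l, hl⟩ := conjHom_eq_inclHom (F := F) π hp _ hd
        rw [hl]
        exact Or.inl ⟨l * e, (map_mul _ _ _).symm⟩
      · exact of_reduced _ (.base _ e hd)
    | step h e w hh he hw =>
      have e1 : conjHom π hp k * (conjHom π hp g' * (conjHom π hp h * inclHom R F e * w)) =
          conjHom π hp (k * g' * h) * inclHom R F e * w := by
        simp only [map_mul, mul_assoc]
      rw [e1]
      by_cases hd : π ∣ (k * g' * h) 0 1
      · obtain ⟨l, hl⟩ := conjHom_eq_inclHom (F := F) π hp _ hd
        rw [hl]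
        exact Or.inr ⟨l * e, w, hw, by rw [map_mul]⟩
      · exact of_reduced _ (.step _ e w hd he hw)
  · rw [← mul_assoc]
    exact of_reduced _ (.step k g w hk hg hw)

theorem normal_form (π : R) (hp : algebraMap R F π ≠ 0) (m : SL2 F)
    (hm : m ∈ Subgroup.closure (((inclHom R F).range : Set (SL2 F)) ∪
      Set.range (conjHom (F := F) π hp))) : HasNormalForm π hp m := by
  induction hm using Subgroup.closure_induction_left with
  | one => exact Or.inl ⟨1, (map_one _).symm⟩
  | mul_left x hx y _ ih =>
    rcases hx with ⟨k, rfl⟩ | ⟨k, rfl⟩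
    · exact ih.incl_mul k
    · exact ih.conj_mul k
  | inv_mul_cancel x hx y _ ih =>
    rcases hx with ⟨k, rfl⟩ | ⟨k, rfl⟩
    · rw [← map_inv]
      exact ih.incl_mul k⁻¹
    · rw [← map_inv]
      exact ih.conj_mul k⁻¹

/-- Clearing the denominators of a reduced word with the right power `π ^ (n + 1)` leaves the
matrix `[[x, y], [πz, πt]]` over `R` with top row nonzero mod `π`. -/
theorem Reduced.denominator {π : R} (hπ : Prime π) {hp : algebraMap R F π ≠ 0} {w : SL2 F}
    (hw : Reduced π hp w) : ∃ (n : ℕ) (x y z t : R),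
      w 0 0 * algebraMap R F π ^ (n + 1) = algebraMap R F x ∧
      w 0 1 * algebraMap R F π ^ (n + 1) = algebraMap R F y ∧
      w 1 0 * algebraMap R F π ^ (n + 1) = algebraMap R F (π * z) ∧
      w 1 1 * algebraMap R F π ^ (n + 1) = algebraMap R F (π * t) ∧
      ¬ (π ∣ x ∧ π ∣ y) := by
  have hq : (algebraMap R F π)⁻¹ * algebraMap R F π = 1 := inv_mul_cancel₀ hp
  induction hw with
  | base h g hh =>
    refine ⟨0, π * (h 0 0 * g 0 0) + h 0 1 * g 1 0, π * (h 0 0 * g 0 1) + h 0 1 * g 1 1,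
      π * (h 1 0 * g 0 0) + h 1 1 * g 1 0, π * (h 1 0 * g 0 1) + h 1 1 * g 1 1,
      ?_, ?_, ?_, ?_, ?_⟩
    · simp only [SL2_mul, conjHom_00, conjHom_01, inclHom_apply, map_add, map_mul]
      linear_combination algebraMap R F (h 0 1) * algebraMap R F (g 1 0) * hq
    · simp only [SL2_mul, conjHom_00, conjHom_01, inclHom_apply, map_add, map_mul]
      linear_combination algebraMap R F (h 0 1) * algebraMap R F (g 1 1) * hq
    · simp only [SL2_mul, conjHom_10, conjHom_11, inclHom_apply, map_add, map_mul]
      ring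
    · simp only [SL2_mul, conjHom_10, conjHom_11, inclHom_apply, map_add, map_mul]
      ring
    rintro ⟨h1, h2⟩
    have h3 := (hπ.dvd_or_dvd ((dvd_add_right (dvd_mul_right _ _)).1 h1)).resolve_left hh
    have h4 := (hπ.dvd_or_dvd ((dvd_add_right (dvd_mul_right _ _)).1 h2)).resolve_left hh
    apply hπ.not_isUnit
    rw [isUnit_iff_dvd_one, ← SL2_det g]
    exact dvd_sub (h4.mul_left _) (h3.mul_left _)
  | step h g w hh hg _ ih =>
    obtain ⟨n, x, y, z, t, hx, hy, hz, ht, hxy⟩ := ih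
    refine ⟨n + 1,
      π * (h 0 0 * (g 0 0 * x + g 0 1 * (π * z)) + h 0 1 * (g 1 1 * z)) + h 0 1 * g 1 0 * x,
      π * (h 0 0 * (g 0 0 * y + g 0 1 * (π * t)) + h 0 1 * (g 1 1 * t)) + h 0 1 * g 1 0 * y,
      π * h 1 0 * (g 0 0 * x + g 0 1 * (π * z)) + h 1 1 * (g 1 0 * x + g 1 1 * (π * z)),
      π * h 1 0 * (g 0 0 * y + g 0 1 * (π * t)) + h 1 1 * (g 1 0 * y + g 1 1 * (π * t)),
      ?_, ?_, ?_, ?_, ?_⟩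
    · simp only [SL2_mul, conjHom_00, conjHom_01, inclHom_apply, map_add, map_mul] at hz ⊢
      linear_combination
        (algebraMap R F π * algebraMap R F (h 0 0) * algebraMap R F (g 0 0) +
          algebraMap R F (h 0 1) * algebraMap R F (g 1 0)) * hx +
        (algebraMap R F π * algebraMap R F (h 0 0) * algebraMap R F (g 0 1) +
          algebraMap R F (h 0 1) * algebraMap R F (g 1 1)) * hz +
        algebraMap R F (h 0 1) * (algebraMap R F (g 1 0) * w 0 0 + algebraMap R F (g 1 1) * w 1 0) *
          algebraMap R F π ^ (n + 1) * hq
    · simp only [SL2_mul, conjHom_00, conjHom_01, inclHom_apply, map_add, map_mul] at ht ⊢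
      linear_combination
        (algebraMap R F π * algebraMap R F (h 0 0) * algebraMap R F (g 0 0) +
          algebraMap R F (h 0 1) * algebraMap R F (g 1 0)) * hy +
        (algebraMap R F π * algebraMap R F (h 0 0) * algebraMap R F (g 0 1) +
          algebraMap R F (h 0 1) * algebraMap R F (g 1 1)) * ht +
        algebraMap R F (h 0 1) * (algebraMap R F (g 1 0) * w 0 1 + algebraMap R F (g 1 1) * w 1 1) *
          algebraMap R F π ^ (n + 1) * hq
    · simp only [SL2_mul, conjHom_10, conjHom_11, inclHom_apply, map_add, map_mul] at hz ⊢
      linear_combination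
        algebraMap R F π * (algebraMap R F π * algebraMap R F (h 1 0) * algebraMap R F (g 0 0) +
          algebraMap R F (h 1 1) * algebraMap R F (g 1 0)) * hx +
        algebraMap R F π * (algebraMap R F π * algebraMap R F (h 1 0) * algebraMap R F (g 0 1) +
          algebraMap R F (h 1 1) * algebraMap R F (g 1 1)) * hz
    · simp only [SL2_mul, conjHom_10, conjHom_11, inclHom_apply, map_add, map_mul] at ht ⊢
      linear_combination
        algebraMap R F π * (algebraMap R F π * algebraMap R F (h 1 0) * algebraMap R F (g 0 0) +
          algebraMap R F (h 1 1) * algebraMap R F (g 1 0)) * hy +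
        algebraMap R F π * (algebraMap R F π * algebraMap R F (h 1 0) * algebraMap R F (g 0 1) +
          algebraMap R F (h 1 1) * algebraMap R F (g 1 1)) * ht
    rintro ⟨h1, h2⟩
    have hb : ¬ π ∣ h 0 1 * g 1 0 := fun hd => (hπ.dvd_or_dvd hd).elim hh hg
    exact hxy ⟨(hπ.dvd_or_dvd ((dvd_add_right (dvd_mul_right _ _)).1 h1)).resolve_left hb,
      (hπ.dvd_or_dvd ((dvd_add_right (dvd_mul_right _ _)).1 h2)).resolve_left hb⟩

/-- If `⟨Γ₀, Γ₁⟩` contains the transvection `I + π⁻¹ v v^⊥` for `v = (a, b)` nonzero mod `π`, then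
`v` can be moved by `SL₂(R)` to a vector with second coordinate divisible by `π`. -/
theorem exists_kill (π : R) (hπ : Prime π) (hp : algebraMap R F π ≠ 0)
    (hinj : Function.Injective (algebraMap R F)) (a b : R) (hab : ¬ (π ∣ a ∧ π ∣ b))
    (u : SL2 F) (hu : u ∈ Subgroup.closure (((inclHom R F).range : Set (SL2 F)) ∪
      Set.range (conjHom (F := F) π hp)))
    (h00 : u 0 0 * algebraMap R F π = algebraMap R F (π - a * b))
    (h01 : u 0 1 * algebraMap R F π = algebraMap R F (a * a))
    (h10 : u 1 0 * algebraMap R F π = algebraMap R F (-(b * b)))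
    (h11 : u 1 1 * algebraMap R F π = algebraMap R F (π + a * b)) :
    ∃ δ : SL2 R, π ∣ δ 1 0 * a + δ 1 1 * b := by
  rcases normal_form π hp u hu with ⟨g, rfl⟩ | ⟨g, w, hw, rfl⟩
  · exfalso
    rw [inclHom_apply, ← map_mul] at h01 h10
    have e1 := hinj h01
    have e2 := hinj h10
    have d1 : π ∣ a * a := e1 ▸ dvd_mul_left _ _
    have d2 : π ∣ b * b := by
      rw [← dvd_neg, ← e2]
      exact dvd_mul_left _ _
    exact hab ⟨(hπ.dvd_or_dvd d1).elim id id, (hπ.dvd_or_dvd d2).elim id id⟩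
  · obtain ⟨n, x, y, z, t, hx, hy, hz, ht, hxy⟩ := hw.denominator hπ
    obtain ⟨u, hu'⟩ : ∃ u, u = inclHom R F g * w := ⟨_, rfl⟩
    rw [← hu'] at h00 h01 h10 h11
    have hwu : w = inclHom R F g⁻¹ * u := by
      rw [hu', map_inv, inv_mul_cancel_left]
    generalize g⁻¹ = δ at hwu
    refine ⟨δ, ?_⟩
    simp only [map_sub, map_add, map_mul, map_neg] at h00 h01 h10 h11
    simp only [hwu, SL2_mul, inclHom_apply] at hx hy hz ht
    have ex : (δ 0 0 * (π - a * b) - δ 0 1 * (b * b)) * π ^ n = x := by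
      apply hinj
      rw [← hx]
      simp only [map_sub, map_mul, map_pow]
      linear_combination (-algebraMap R F π ^ n) *
        (algebraMap R F (δ 0 0) * h00 + algebraMap R F (δ 0 1) * h10)
    have ey : (δ 0 0 * (a * a) + δ 0 1 * (π + a * b)) * π ^ n = y := by
      apply hinj
      rw [← hy]
      simp only [map_add, map_mul, map_pow]
      linear_combination (-algebraMap R F π ^ n) *
        (algebraMap R F (δ 0 0) * h01 + algebraMap R F (δ 0 1) * h11)
    have ez : (δ 1 0 * (π - a * b) - δ 1 1 * (b * b)) * π ^ n = π * z := by
      apply hinj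
      rw [← hz]
      simp only [map_sub, map_mul, map_pow]
      linear_combination (-algebraMap R F π ^ n) *
        (algebraMap R F (δ 1 0) * h00 + algebraMap R F (δ 1 1) * h10)
    have et : (δ 1 0 * (a * a) + δ 1 1 * (π + a * b)) * π ^ n = π * t := by
      apply hinj
      rw [← ht]
      simp only [map_add, map_mul, map_pow]
      linear_combination (-algebraMap R F π ^ n) *
        (algebraMap R F (δ 1 0) * h01 + algebraMap R F (δ 1 1) * h11)
    -- the transvection has denominator exactly `π`, so the word `w` contributes `n = 0`
    obtain rfl : n = 0 := by
      by_contra hn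
      have hd : π ∣ π ^ n := dvd_pow_self _ hn
      exact hxy ⟨ex ▸ hd.mul_left _, ey ▸ hd.mul_left _⟩
    rw [pow_zero, mul_one] at ez et
    have d1 : π ∣ b * (δ 1 0 * a + δ 1 1 * b) := ⟨δ 1 0 - z, by linear_combination -ez⟩
    have d2 : π ∣ a * (δ 1 0 * a + δ 1 1 * b) := ⟨t - δ 1 1, by linear_combination et⟩
    by_contra hc
    exact hab ⟨(hπ.dvd_or_dvd d2).resolve_right hc, (hπ.dvd_or_dvd d1).resolve_right hc⟩

/-! ### Descent on denominators -/

/-- Over a Bezout domain, a singular matrix with nonzero first column has bottom row zero after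
left multiplication by an element of `SL₂`. -/
theorem bezout_bottom {A : Type*} [CommRing A] [IsDomain A] [IsBezout A] (x y z t : A)
    (hdet : x * t = y * z) (hne : ¬ (x = 0 ∧ z = 0)) :
    ∃ ε : SL2 A, ε 1 0 * x + ε 1 1 * z = 0 ∧ ε 1 0 * y + ε 1 1 * t = 0 := by
  obtain ⟨a, ha⟩ := IsBezout.gcd_dvd_left x z
  obtain ⟨b, hb⟩ := IsBezout.gcd_dvd_right x z
  obtain ⟨p, q, hpq⟩ := IsBezout.gcd_eq_sum x z
  generalize IsBezout.gcd x z = d at ha hb hpq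
  have hd : d ≠ 0 := by
    rintro rfl
    exact hne ⟨by rw [ha, zero_mul], by rw [hb, zero_mul]⟩
  have h1 : p * a - q * -b = 1 := by
    apply mul_left_cancel₀ hd
    linear_combination hpq - p * ha - q * hb
  refine ⟨mkSL2 p q (-b) a h1, ?_, ?_⟩
  · rw [mkSL2_10, mkSL2_11]
    linear_combination a * hb - b * ha
  · rw [mkSL2_10, mkSL2_11]
    apply mul_left_cancel₀ hd
    linear_combination hdet - t * ha + y * hb

theorem exists_bottom (π : R) [IsDomain (R ⧸ Ideal.span {π})] [IsBezout (R ⧸ Ideal.span {π})]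
    (hsurj : Function.Surjective (Matrix.SpecialLinearGroup.map (n := Fin 2)
      (Ideal.Quotient.mk (Ideal.span {π})))) (x y z t : R) (hdet : π ∣ x * t - y * z) :
    ∃ δ : SL2 R, π ∣ δ 1 0 * x + δ 1 1 * z ∧ π ∣ δ 1 0 * y + δ 1 1 * t := by
  simp only [← Ideal.Quotient.eq_zero_iff_dvd, map_sub, map_add, map_mul] at hdet ⊢
  rw [sub_eq_zero] at hdet
  generalize hf : Ideal.Quotient.mk (Ideal.span {π}) = f at *
  suffices h : ∃ ε : SL2 (R ⧸ Ideal.span {π}),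
      ε 1 0 * f x + ε 1 1 * f z = 0 ∧ ε 1 0 * f y + ε 1 1 * f t = 0 by
    obtain ⟨ε, h1⟩ := h
    obtain ⟨δ, rfl⟩ := hsurj ε
    exact ⟨δ, h1⟩
  by_cases h1 : f x = 0 ∧ f z = 0
  · by_cases h2 : f y = 0 ∧ f t = 0
    · exact ⟨1, by simp [h1.1, h1.2], by simp [h2.1, h2.2]⟩
    · obtain ⟨ε, h3, h4⟩ := bezout_bottom (f y) (f x) (f t) (f z)
        (by rw [h1.1, h1.2, mul_zero, zero_mul]) h2
      exact ⟨ε, h4, h3⟩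
  · exact bezout_bottom _ _ _ _ hdet h1

/-- Descent on the power of `π` clearing the denominators of `m`. -/
theorem mem_of_denominator [IsDomain R] (π : R) (hp : algebraMap R F π ≠ 0)
    (hinj : Function.Injective (algebraMap R F))
    [IsDomain (R ⧸ Ideal.span {π})] [IsBezout (R ⧸ Ideal.span {π})]
    (hsurj : Function.Surjective (Matrix.SpecialLinearGroup.map (n := Fin 2)
      (Ideal.Quotient.mk (Ideal.span {π})))) (n : ℕ) (m : SL2 F) (x y z t : R)
    (hx : m 0 0 * algebraMap R F π ^ n = algebraMap R F x)
    (hy : m 0 1 * algebraMap R F π ^ n = algebraMap R F y)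
    (hz : m 1 0 * algebraMap R F π ^ n = algebraMap R F z)
    (ht : m 1 1 * algebraMap R F π ^ n = algebraMap R F t) :
    m ∈ Subgroup.closure (((inclHom R F).range : Set (SL2 F)) ∪
      Set.range (conjHom (F := F) π hp)) := by
  induction n generalizing m x y z t with
  | zero =>
    rw [pow_zero, mul_one] at hx hy hz ht
    apply Subgroup.subset_closure
    left
    have hdet : x * t - y * z = 1 := by
      apply hinj
      rw [map_sub, map_mul, map_mul, map_one, ← hx, ← hy, ← hz, ← ht, SL2_det]
    exact ⟨mkSL2 x y z t hdet, SL2_ext hx.symm hy.symm hz.symm ht.symm⟩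
  | succ n ih =>
    have hπ0 : π ≠ 0 := by
      rintro rfl
      exact hp (map_zero _)
    have hdet : x * t - y * z = π ^ (2 * n + 2) := by
      apply hinj
      rw [map_sub, map_mul, map_mul, map_pow, ← hx, ← hy, ← hz, ← ht]
      linear_combination algebraMap R F π ^ (2 * n + 2) * SL2_det m
    -- an element of `Γ₀` makes the bottom row of the numerator divisible by `π`
    obtain ⟨δ, ⟨z', hz'⟩, ⟨t', ht'⟩⟩ := exists_bottom π hsurj x y z t
      (hdet ▸ dvd_pow_self _ (by lia))
    have hdet' : z' * (δ 0 0 * y + δ 0 1 * t) - t' * (δ 0 0 * x + δ 0 1 * z) =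
        -π ^ (2 * n + 1) := by
      apply mul_left_cancel₀ hπ0
      linear_combination (-(δ 0 0 * y + δ 0 1 * t)) * hz' + (δ 0 0 * x + δ 0 1 * z) * ht' -
        (x * t - y * z) * SL2_det δ - hdet
    -- an element of `Γ₁` lowers the exponent of the denominator
    obtain ⟨ε, ⟨r, hr⟩, ⟨s, hs⟩⟩ := exists_bottom π hsurj (δ 0 0 * x + δ 0 1 * z)
      (δ 0 0 * y + δ 0 1 * t) z' t' (by
        rw [← dvd_neg, show -((δ 0 0 * x + δ 0 1 * z) * t' - (δ 0 0 * y + δ 0 1 * t) * z') =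
          -π ^ (2 * n + 1) by linear_combination hdet', dvd_neg]
        exact dvd_pow_self _ (by lia))
    have hε : ε 1 0 * -ε 0 1 - ε 1 1 * -ε 0 0 = 1 := by linear_combination SL2_det ε
    obtain ⟨h, hh⟩ : ∃ h, h = mkSL2 (ε 1 0) (ε 1 1) (-ε 0 0) (-ε 0 1) hε := ⟨_, rfl⟩
    have h00 : h 0 0 = ε 1 0 := by rw [hh, mkSL2_00]
    have h01 : h 0 1 = ε 1 1 := by rw [hh, mkSL2_01]
    have h10 : h 1 0 = -ε 0 0 := by rw [hh, mkSL2_10]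
    have h11 : h 1 1 = -ε 0 1 := by rw [hh, mkSL2_11]
    obtain ⟨m₁, hm₁⟩ : ∃ m₁, m₁ = inclHom R F δ * m := ⟨_, rfl⟩
    have k00 : m₁ 0 0 * algebraMap R F π ^ (n + 1) =
        algebraMap R F (δ 0 0 * x + δ 0 1 * z) := by
      rw [hm₁, SL2_mul, inclHom_apply, inclHom_apply, map_add, map_mul, map_mul]
      linear_combination algebraMap R F (δ 0 0) * hx + algebraMap R F (δ 0 1) * hz
    have k01 : m₁ 0 1 * algebraMap R F π ^ (n + 1) =
        algebraMap R F (δ 0 0 * y + δ 0 1 * t) := by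
      rw [hm₁, SL2_mul, inclHom_apply, inclHom_apply, map_add, map_mul, map_mul]
      linear_combination algebraMap R F (δ 0 0) * hy + algebraMap R F (δ 0 1) * ht
    have k10 : m₁ 1 0 * algebraMap R F π ^ n = algebraMap R F z' := by
      apply mul_left_cancel₀ hp
      rw [← map_mul, ← hz', hm₁, SL2_mul, inclHom_apply, inclHom_apply, map_add, map_mul, map_mul]
      linear_combination algebraMap R F (δ 1 0) * hx + algebraMap R F (δ 1 1) * hz
    have k11 : m₁ 1 1 * algebraMap R F π ^ n = algebraMap R F t' := by
      apply mul_left_cancel₀ hp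
      rw [← map_mul, ← ht', hm₁, SL2_mul, inclHom_apply, inclHom_apply, map_add, map_mul, map_mul]
      linear_combination algebraMap R F (δ 1 0) * hy + algebraMap R F (δ 1 1) * ht
    have hq : algebraMap R F π * (algebraMap R F π)⁻¹ = 1 := mul_inv_cancel₀ hp
    have key := ih (conjHom π hp h * m₁) r s
      (-ε 0 0 * (δ 0 0 * x + δ 0 1 * z) - ε 0 1 * z')
      (-ε 0 0 * (δ 0 0 * y + δ 0 1 * t) - ε 0 1 * t')
      (by
        rw [SL2_mul, conjHom_00, conjHom_01, h00, h01]
        apply mul_left_cancel₀ hp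
        rw [← map_mul, ← hr, map_add, map_mul, map_mul]
        linear_combination algebraMap R F (ε 1 0) * k00 + algebraMap R F (ε 1 1) * k10 +
          algebraMap R F (ε 1 1) * m₁ 1 0 * algebraMap R F π ^ n * hq)
      (by
        rw [SL2_mul, conjHom_00, conjHom_01, h00, h01]
        apply mul_left_cancel₀ hp
        rw [← map_mul, ← hs, map_add, map_mul, map_mul]
        linear_combination algebraMap R F (ε 1 0) * k01 + algebraMap R F (ε 1 1) * k11 +
          algebraMap R F (ε 1 1) * m₁ 1 1 * algebraMap R F π ^ n * hq)
      (by
        rw [SL2_mul, conjHom_10, conjHom_11, h10, h11, map_sub, map_mul, map_mul, map_neg, map_neg]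
        linear_combination (-algebraMap R F (ε 0 0)) * k00 - algebraMap R F (ε 0 1) * k10)
      (by
        rw [SL2_mul, conjHom_10, conjHom_11, h10, h11, map_sub, map_mul, map_mul, map_neg, map_neg]
        linear_combination (-algebraMap R F (ε 0 0)) * k01 - algebraMap R F (ε 0 1) * k11)
    rw [hm₁] at key
    have hδmem : inclHom R F δ ∈ Subgroup.closure (((inclHom R F).range : Set (SL2 F)) ∪
        Set.range (conjHom (F := F) π hp)) := Subgroup.subset_closure (Or.inl ⟨δ, rfl⟩)
    have hhmem : conjHom π hp h ∈ Subgroup.closure (((inclHom R F).range : Set (SL2 F)) ∪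
        Set.range (conjHom (F := F) π hp)) := Subgroup.subset_closure (Or.inr ⟨h, rfl⟩)
    rwa [Subgroup.mul_mem_cancel_left _ hhmem, Subgroup.mul_mem_cancel_left _ hδmem] at key

theorem exists_denominator_s3 (π : R) (hp : algebraMap R F π ≠ 0) (s : F)
    (hs : s ∈ Subring.closure (Set.range (algebraMap R F) ∪ {(algebraMap R F π)⁻¹})) :
    ∃ (n : ℕ) (r : R), s * algebraMap R F π ^ n = algebraMap R F r := by
  induction hs using Subring.closure_induction with
  | mem x hx =>
    rcases hx with ⟨r, rfl⟩ | rfl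
    · exact ⟨0, r, by rw [pow_zero, mul_one]⟩
    · exact ⟨1, 1, by rw [pow_one, map_one, inv_mul_cancel₀ hp]⟩
  | zero => exact ⟨0, 0, by rw [zero_mul, map_zero]⟩
  | one => exact ⟨0, 1, by rw [pow_zero, mul_one, map_one]⟩
  | add x y _ _ ihx ihy =>
    obtain ⟨n, r, hr⟩ := ihx
    obtain ⟨k, s, hs⟩ := ihy
    refine ⟨n + k, r * π ^ k + s * π ^ n, ?_⟩
    simp only [map_add, map_mul, map_pow, ← hr, ← hs]
    ring
  | neg x _ ihx =>
    obtain ⟨n, r, hr⟩ := ihx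
    exact ⟨n, -r, by rw [map_neg, ← hr, neg_mul]⟩
  | mul x y _ _ ihx ihy =>
    obtain ⟨n, r, hr⟩ := ihx
    obtain ⟨k, s, hs⟩ := ihy
    refine ⟨n + k, r * s, ?_⟩
    simp only [map_mul, ← hr, ← hs]
    ring

theorem mem_SL2In_iff (S : Subring F) (m : SL2 F) : m ∈ SL2In S ↔ ∀ i j, m i j ∈ S := by
  constructor
  · rintro ⟨k, rfl⟩ i j
    exact (k i j).2
  · intro h
    have hdet : (⟨m 0 0, h 0 0⟩ : S) * ⟨m 1 1, h 1 1⟩ - ⟨m 0 1, h 0 1⟩ * ⟨m 1 0, h 1 0⟩ = 1 :=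
      Subtype.ext (SL2_det m)
    exact ⟨mkSL2 _ _ _ _ hdet, SL2_ext rfl rfl rfl rfl⟩

/-! ### Lifting from `SL₂(R/πR)` -/

/-- If every vector nonzero mod `π` can be moved by `SL₂(R)` to a vector with second coordinate
divisible by `π`, then `R/πR` is Bezout and `SL₂(R) → SL₂(R/πR)` is surjective. -/
theorem bezout_and_surjective (π : R) (hπ : Prime π)
    (hkill : ∀ a b : R, ¬ (π ∣ a ∧ π ∣ b) → ∃ δ : SL2 R, π ∣ δ 1 0 * a + δ 1 1 * b) :
    IsBezout (R ⧸ Ideal.span {π}) ∧ Function.Surjective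
      (Matrix.SpecialLinearGroup.map (n := Fin 2) (Ideal.Quotient.mk (Ideal.span {π}))) := by
  simp only [← Ideal.Quotient.eq_zero_iff_dvd, map_add, map_mul] at hkill
  have hf : Function.Surjective (Ideal.Quotient.mk (Ideal.span {π})) :=
    Ideal.Quotient.mk_surjective
  have hnt : (1 : R ⧸ Ideal.span {π}) ≠ 0 := by
    intro h
    rw [← map_one (Ideal.Quotient.mk (Ideal.span {π})), Ideal.Quotient.eq_zero_iff_dvd,
      ← isUnit_iff_dvd_one] at h
    exact hπ.not_isUnit h
  generalize Ideal.Quotient.mk (Ideal.span {π}) = f at *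
  have fdet : ∀ δ : SL2 R, f (δ 0 0) * f (δ 1 1) - f (δ 0 1) * f (δ 1 0) = 1 := fun δ => by
    rw [← map_mul, ← map_mul, ← map_sub, SL2_det, map_one]
  constructor
  · rw [IsBezout.iff_span_pair_isPrincipal]
    intro a b
    obtain ⟨a, rfl⟩ := hf a
    obtain ⟨b, rfl⟩ := hf b
    by_cases hab : f a = 0 ∧ f b = 0
    · rw [hab.1, hab.2]
      exact ⟨0, by simp⟩
    · obtain ⟨δ, hδ⟩ := hkill a b hab
      refine ⟨f (δ 0 0) * f a + f (δ 0 1) * f b, ?_⟩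
      apply le_antisymm
      · rw [Ideal.span_le]
        rintro c (rfl | rfl)
        · exact Ideal.mem_span_singleton'.2 ⟨f (δ 1 1), by
            linear_combination f a * fdet δ + f (δ 0 1) * hδ⟩
        · exact Ideal.mem_span_singleton'.2 ⟨-f (δ 1 0), by
            linear_combination f b * fdet δ - f (δ 0 0) * hδ⟩
      · refine (Ideal.span_singleton_le_iff_mem _).2 ?_
        exact Ideal.mem_span_pair.2 ⟨_, _, rfl⟩
  · intro g
    obtain ⟨a, ha⟩ := hf (g 0 0)
    obtain ⟨c, hc⟩ := hf (g 1 0)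
    obtain ⟨δ, hδ⟩ := hkill a c (by
      rintro ⟨h1, h2⟩
      apply hnt
      rw [← SL2_det g, ← ha, ← hc, h1, h2]
      ring)
    rw [ha, hc] at hδ
    -- `δ` makes `g` upper triangular, with diagonal entries inverse to each other
    obtain ⟨k, hk⟩ : ∃ k, k = Matrix.SpecialLinearGroup.map (n := Fin 2) f δ * g := ⟨_, rfl⟩
    have k10 : k 1 0 = 0 := by
      rw [hk, SL2_mul]
      exact hδ
    have kdet := SL2_det k
    rw [k10, mul_zero, sub_zero] at kdet
    obtain ⟨u, hu⟩ := hf (k 0 0)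
    obtain ⟨v, hv⟩ := hf (k 1 1)
    obtain ⟨x, hx⟩ := hf (k 0 1)
    have d1 : (2 * u - u * u * v) * v - (u * v - 1) * (1 - u * v) = 1 := by ring
    have d2 : (1 : R) * 1 - v * x * 0 = 1 := by ring
    -- `[[2u - u²v, uv - 1], [1 - uv, v]]` lifts `diag(u, v)` when `uv = 1` mod `π`
    have hlift : Matrix.SpecialLinearGroup.map (n := Fin 2) f
        (mkSL2 (2 * u - u * u * v) (u * v - 1) (1 - u * v) v d1 * mkSL2 1 (v * x) 0 1 d2) = k := by
      have happ : ∀ (e : SL2 R) (i j : Fin 2),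
          Matrix.SpecialLinearGroup.map (n := Fin 2) f e i j = f (e i j) := fun _ _ _ => rfl
      apply SL2_ext <;>
        simp only [happ, SL2_mul, mkSL2_00, mkSL2_01, mkSL2_10, mkSL2_11, map_sub,
          map_mul, map_one, map_zero, map_ofNat, hu, hv, hx, k10]
      · linear_combination (-k 0 0) * kdet
      · linear_combination (1 + k 0 1 - k 0 1 * k 0 0 * k 1 1) * kdet
      · linear_combination -kdet
      · linear_combination (-k 1 1 * k 0 1) * kdet
    refine ⟨δ⁻¹ * (mkSL2 (2 * u - u * u * v) (u * v - 1) (1 - u * v) v d1 *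
      mkSL2 1 (v * x) 0 1 d2), ?_⟩
    rw [map_mul, hlift, hk, map_inv, inv_mul_cancel_left]

end Aux

/-- For an integral domain `R` with fraction field `F` and a prime `π ∈ R`
with `⋂ₙ πⁿR = {0}`, the group `SL₂(R[1/π])` equals the subgroup generated by
`SL₂(R) ∪ D(1/π,1)·SL₂(R)·D(π,1)` if and only if `R/πR` is a Bezout domain and
`SL₂(R) → SL₂(R/πR)` is surjective. -/
theorem statement3 (R : Type*) [CommRing R] [IsDomain R]
    (F : Type*) [Field F] [Algebra R F] [IsFractionRing R F]
    (π : R) (hπ : Prime π)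
    (hA : (⋂ n : ℕ, ((Ideal.span {π ^ n} : Ideal R) : Set R)) = {0}) :
    (SL2In (Subring.closure (Set.range (algebraMap R F) ∪ {(algebraMap R F π)⁻¹})) =
      Subgroup.closure
        (↑((Matrix.SpecialLinearGroup.map (algebraMap R F)).range :
            Subgroup (SL2 F)) ∪
          conjSet (algebraMap R F π)
            (Matrix.SpecialLinearGroup.map (algebraMap R F)).range))
    ↔ ((IsDomain (R ⧸ Ideal.span {π}) ∧ IsBezout (R ⧸ Ideal.span {π})) ∧
      Function.Surjective
        (Matrix.SpecialLinearGroup.map (n := Fin 2)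
          (Ideal.Quotient.mk (Ideal.span {π})))) := by
  have hinj : Function.Injective (algebraMap R F) := IsFractionRing.injective R F
  have hp : algebraMap R F π ≠ 0 := fun h =>
    hπ.ne_zero (hinj (h.trans (map_zero _).symm))
  have hdom : IsDomain (R ⧸ Ideal.span {π}) :=
    (Ideal.Quotient.isDomain_iff_prime _).2 ((Ideal.span_singleton_prime hπ.ne_zero).2 hπ)
  have hRS : ∀ r : R, algebraMap R F r ∈
      Subring.closure (Set.range (algebraMap R F) ∪ {(algebraMap R F π)⁻¹}) := fun r =>
    Subring.subset_closure (Or.inl ⟨r, rfl⟩)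
  have hqS : (algebraMap R F π)⁻¹ ∈
      Subring.closure (Set.range (algebraMap R F) ∪ {(algebraMap R F π)⁻¹}) :=
    Subring.subset_closure (Or.inr rfl)
  have hq : (algebraMap R F π)⁻¹ * algebraMap R F π = 1 := inv_mul_cancel₀ hp
  rw [conjSet_eq π hp]
  constructor
  · intro H
    have hkill : ∀ a b : R, ¬ (π ∣ a ∧ π ∣ b) → ∃ δ : SL2 R, π ∣ δ 1 0 * a + δ 1 1 * b := by
      intro a b hab
      have hdet : (algebraMap R F (π - a * b) * (algebraMap R F π)⁻¹) *
          (algebraMap R F (π + a * b) * (algebraMap R F π)⁻¹) -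
          (algebraMap R F (a * a) * (algebraMap R F π)⁻¹) *
          (algebraMap R F (-(b * b)) * (algebraMap R F π)⁻¹) = 1 := by
        simp only [map_sub, map_add, map_mul, map_neg]
        linear_combination ((algebraMap R F π)⁻¹ * algebraMap R F π + 1) * hq
      refine exists_kill (F := F) π hπ hp hinj a b hab (mkSL2 _ _ _ _ hdet) ?_ ?_ ?_ ?_ ?_
      · refine H.le ?_
        rw [mem_SL2In_iff]
        intro i j
        fin_cases i <;> fin_cases j <;> exact mul_mem (hRS _) hqS
      all_goals simp only [mkSL2_00, mkSL2_01, mkSL2_10, mkSL2_11, mul_assoc, hq, mul_one]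
    obtain ⟨hB, hS⟩ := bezout_and_surjective π hπ hkill
    exact ⟨⟨hdom, hB⟩, hS⟩
  · rintro ⟨⟨-, hB⟩, hS⟩
    apply le_antisymm
    · intro m hm
      rw [mem_SL2In_iff] at hm
      obtain ⟨n₁, x, hx⟩ := exists_denominator_s3 π hp _ (hm 0 0)
      obtain ⟨n₂, y, hy⟩ := exists_denominator_s3 π hp _ (hm 0 1)
      obtain ⟨n₃, z, hz⟩ := exists_denominator_s3 π hp _ (hm 1 0)
      obtain ⟨n₄, t, ht⟩ := exists_denominator_s3 π hp _ (hm 1 1)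
      apply mem_of_denominator π hp hinj hS (n₁ + n₂ + n₃ + n₄) m (x * π ^ (n₂ + n₃ + n₄))
        (y * π ^ (n₁ + n₃ + n₄)) (z * π ^ (n₁ + n₂ + n₄)) (t * π ^ (n₁ + n₂ + n₃))
      all_goals
        simp only [map_mul, map_pow, ← hx, ← hy, ← hz, ← ht]
        ring
    · rw [Subgroup.closure_le]
      rintro m (⟨k, rfl⟩ | ⟨k, rfl⟩)
      · exact (mem_SL2In_iff _ _).2 fun i j => hRS (k i j)
      · refine (mem_SL2In_iff _ _).2 fun i j => ?_
        fin_cases i <;> fin_cases j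
        · exact hRS _
        · exact mul_mem (hRS _) hqS
        · exact mul_mem (hRS _) (hRS _)
        · exact hRS _
end
end
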